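/- For fixed θ ∈ (0, π) and a, b > −1, the Jacobi polynomial satisfies the asymptotic formula P_n^{(a,b)}(cos θ) = (πn)^{−1/2} (sin(θ/2))^{−a−1/2} (cos(θ/2))^{−b−1/2} cos[(n + (a+b+1)/2)θ − (π/2)(a + 1/2)] + O(n^{−3/2}) as n → ∞, uniformly for θ in compact subsets of (0,π). -/

import Mathlib

open MeasureTheory Real Filter Finset intervalIntegral

/-- Jacobi polynomial `P_n^{(a,b)}` via the explicit hypergeometric-type sum,
normalized so that `P_n^{(a,b)}(1) = Γ(n+a+1)/(n! Γ(a+1))`. -/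
noncomputable def jacobiP (a b : ℝ) (n : ℕ) (x : ℝ) : ℝ :=
  (Real.Gamma (a + n + 1) / (n.factorial * Real.Gamma (a + b + (n : ℝ) + 1))) *
    ∑ m ∈ Finset.range (n + 1),
      (n.choose m : ℝ) * Real.Gamma (a + b + (n : ℝ) + m + 1) / Real.Gamma (a + (m : ℝ) + 1) *
        ((x - 1) / 2) ^ m

/-- Squared norm `h_j^{(a,b)}` of the Jacobi polynomials. -/
noncomputable def jacobiH (a b : ℝ) (j : ℕ) : ℝ :=
  2 ^ (a + b + 1) * Real.Gamma ((j : ℝ) + a + 1) * Real.Gamma ((j : ℝ) + b + 1) /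
    (j.factorial * (2 * (j : ℝ) + a + b + 1) * Real.Gamma ((j : ℝ) + a + b + 1))

/-- Orthonormalized Jacobi functions `φ_j`. -/
noncomputable def jacobiPhi (a b : ℝ) (j : ℕ) (x : ℝ) : ℝ :=
  jacobiP a b j x * (1 - x) ^ (a / 2) * (1 + x) ^ (b / 2) / Real.sqrt (jacobiH a b j)

/-- Bessel function of the first kind of order `ν` (series definition). -/
noncomputable def besselJ (ν : ℝ) (t : ℝ) : ℝ :=
  ∑' m : ℕ, (-1 : ℝ) ^ m / (m.factorial * Real.Gamma ((m : ℝ) + ν + 1)) *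
    (t / 2) ^ (2 * (m : ℝ) + ν)

/-- Christoffel–Darboux kernel of the Jacobi unitary ensemble. -/
noncomputable def K2 (a b : ℝ) (N : ℕ) (x y : ℝ) : ℝ :=
  ∑ j ∈ Finset.range N, jacobiPhi a b j x * jacobiPhi a b j y

/-- The operator `ε`: `(εg)(x) = (1/2)(∫_{-1}^x g - ∫_x^1 g)`. -/
noncomputable def epsOp (g : ℝ → ℝ) (x : ℝ) : ℝ :=
  (1 / 2) * ((∫ y in (-1 : ℝ)..x, g y) - ∫ y in x..(1 : ℝ), g y)

/-!
For `x = cos θ`, Rodrigues' formula and Cauchy's integral formula write the weight times `P_n(x)`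
as a constant times the integral of `(1 - z) ^ (n + a) * (1 + z) ^ (n + b) / (z - x) ^ (n + 1)`
over the unit circle. On the arc `z = exp (i φ)`, `0 < φ < π`, the phase is straightened *globally*
by a coordinate `W` with `1 - z ^ 2 = -2 * exp (i θ) * (1 - W ^ 2) * (z - x)`, whose values at `0`,
`θ`, `π` are `-1`, `0`, `1`. Hence `∫₀^π f(W) W' dφ = ∫₋₁¹ f(s) ds` exactly for polynomial `f`.

Expand the amplitude at the saddle point as `c W' + d W W' + O((φ - θ) ^ 2)`. The first term gives
`c ∫₋₁¹ (1 - s ^ 2) ^ n ds = c (√(π / n) + O(n ^ (-3/2)))` by Wallis' inequalities, the second one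
vanishes because its integrand in `s` is odd, and the bound `‖1 - W ^ 2‖ ≤ exp (-c₀ (φ - θ) ^ 2)`
makes the third one `O(n ^ (-3/2))`, everything uniformly for `θ` in a compact set.
-/

section CauchyFormula

open Metric Function

variable {E : Type*} [NormedAddCommGroup E] [NormedSpace ℂ E] [CompleteSpace E]
  {f : ℂ → E} {c w : ℂ} {R : ℝ}

lemma diffContOnCl_dslope (hf : DiffContOnCl ℂ f (ball c R)) (hw : w ∈ ball c R) :
    DiffContOnCl ℂ (dslope f w) (ball c R) :=
  ⟨(Complex.differentiableOn_dslope (isOpen_ball.mem_nhds hw)).2 hf.differentiableOn,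
    (continuousOn_dslope (mem_of_superset (isOpen_ball.mem_nhds hw) subset_closure)).2
      ⟨hf.continuousOn, hf.differentiableAt isOpen_ball hw⟩⟩

lemma circleIntegral_sub_zpow_smul_eq_dslope (hf : DiffContOnCl ℂ f (ball c R))
    (hw : w ∈ ball c R) {k : ℤ} (hk : k ≠ -1) :
    (∮ z in C(c, R), (z - w) ^ k • f z) = ∮ z in C(c, R), (z - w) ^ (k + 1) • dslope f w z := by
  have hR : 0 < R := pos_of_mem_ball hw
  have hne : ∀ z ∈ sphere c R, z - w ≠ 0 := fun z hz =>
    sub_ne_zero.2 (sphere_disjoint_ball.ne_of_mem hz hw)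
  have hpow (m : ℤ) : ContinuousOn (fun z : ℂ => (z - w) ^ m) (sphere c R) :=
    ContinuousOn.zpow₀ (by fun_prop) m fun z hz => Or.inl (hne z hz)
  have hslope : ContinuousOn (dslope f w) (sphere c R) :=
    (diffContOnCl_dslope hf hw).continuousOn_ball.mono sphere_subset_closedBall
  have hsplit : Set.EqOn (fun z => (z - w) ^ k • f z)
      (fun z => (z - w) ^ k • f w + (z - w) ^ (k + 1) • dslope f w z) (sphere c R) := fun z hz => by
    simp only [zpow_add_one₀ (hne z hz), mul_smul, sub_smul_dslope, ← smul_add, add_sub_cancel]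
  rw [circleIntegral.integral_congr hR.le hsplit, circleIntegral.integral_add,
    circleIntegral.integral_smul_const, circleIntegral.integral_sub_zpow_of_ne hk, zero_smul,
    zero_add]
  · exact ((hpow k).smul continuousOn_const).circleIntegrable hR.le
  · exact ((hpow (k + 1)).smul hslope).circleIntegrable hR.le

lemma circleIntegral_sub_zpow_smul_eq_iterate_dslope (n : ℕ) (hf : DiffContOnCl ℂ f (ball c R))
    (hw : w ∈ ball c R) :
    (∮ z in C(c, R), (z - w) ^ (-(n : ℤ) - 1) • f z) =
      (2 * π * Complex.I : ℂ) • ((swap dslope w)^[n] f) w := by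
  induction n generalizing f with
  | zero => simpa using hf.circleIntegral_sub_inv_smul hw
  | succ n ih =>
    rw [circleIntegral_sub_zpow_smul_eq_dslope hf hw (by lia), iterate_succ_apply,
      swap, ← ih (diffContOnCl_dslope hf hw)]
    congr! 4
    lia

lemma iterate_dslope_self_eq_iteratedDeriv (n : ℕ) (hf : AnalyticAt ℂ f w) :
    ((swap dslope w)^[n] f) w = (n.factorial : ℂ)⁻¹ • iteratedDeriv n f w := by
  obtain ⟨p, hp⟩ := hf
  have hcoeff : ((swap dslope w)^[n] f) w = p.coeff n := by
    rw [← (hp.has_fpower_series_iterate_dslope_fslope n).coeff_zero 1,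
      ← FormalMultilinearSeries.coeff, FormalMultilinearSeries.coeff_iterate_fslope, zero_add]
  obtain ⟨r, hr⟩ := hp
  rw [iteratedDeriv_eq_iteratedFDeriv, hcoeff, FormalMultilinearSeries.coeff,
    eq_inv_smul_iff₀ (by exact_mod_cast n.factorial_ne_zero), Nat.cast_smul_eq_nsmul]
  exact hr.factorial_smul 1 n

lemma circleIntegral_sub_zpow_smul_eq_iteratedDeriv (n : ℕ) (hf : DiffContOnCl ℂ f (ball c R))
    (hw : w ∈ ball c R) :
    (∮ z in C(c, R), (z - w) ^ (-(n : ℤ) - 1) • f z) =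
      (2 * π * Complex.I : ℂ) • (n.factorial : ℂ)⁻¹ • iteratedDeriv n f w := by
  rw [circleIntegral_sub_zpow_smul_eq_iterate_dslope n hf hw, iterate_dslope_self_eq_iteratedDeriv n
    (hf.differentiableOn.analyticAt (isOpen_ball.mem_nhds hw))]

end CauchyFormula

section JacobiSum

lemma factorial_succ_mul_choose_succ {R : Type*} [CommRing R] [BinomialRing R] (r : R) (k : ℕ) :
    ((k + 1).factorial : R) * Ring.choose r (k + 1) =
      k.factorial * Ring.choose r k * (r - k) := by
  have h := Ring.choose_smul_choose r (Nat.le_add_right k 1)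
  simp only [Nat.choose_succ_self_right, Nat.add_sub_cancel_left, Ring.choose_one_right,
    nsmul_eq_mul] at h
  rw [Nat.factorial_succ]
  push_cast at h ⊢
  linear_combination k.factorial * h

lemma Gamma_add_one_eq_factorial_mul_choose_mul_Gamma {r : ℝ} {k : ℕ} (h : (k : ℝ) < r + 1) :
    Real.Gamma (r + 1) = k.factorial * Ring.choose r k * Real.Gamma (r - k + 1) := by
  induction k with
  | zero => simp
  | succ k ih =>
    push_cast at h ⊢
    rw [factorial_succ_mul_choose_succ, ih (by linarith),
      Real.Gamma_add_one (s := r - k) (by linarith)]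
    ring_nf

lemma sum_choose_mul_choose_mul_one_add_pow {R : Type*} [CommRing R] [BinomialRing R]
    (r s y : R) (n : ℕ) :
    ∑ p ∈ antidiagonal n, Ring.choose r p.1 * Ring.choose s p.2 * ((1 + y) ^ p.1 * y ^ p.2) =
      ∑ p ∈ antidiagonal n, Ring.choose r p.1 * Ring.choose (r - p.1 + s) p.2 * y ^ p.2 := by
  have vandermonde (t : R) (k : ℕ) : Ring.choose (t + s) k =
      ∑ q ∈ antidiagonal k, Ring.choose t q.1 * Ring.choose s q.2 :=
    Ring.add_choose_eq k (Commute.all t s)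
  have absorb (k l : ℕ) : ((k + l).choose k : R) * Ring.choose r (k + l) =
      Ring.choose r k * Ring.choose (r - k) l := by
    simpa using Ring.choose_smul_choose r (Nat.le_add_right k l)
  simp only [vandermonde, (Commute.one_left y).add_pow', Finset.mul_sum, Finset.sum_mul,
    one_pow, one_mul, Finset.sum_sigma', nsmul_eq_mul]
  refine Finset.sum_nbij' (fun x => ⟨(x.2.1, x.2.2 + x.1.2), (x.2.2, x.1.2)⟩)
    (fun x => ⟨(x.1.1 + x.2.1, x.2.2), (x.1.1, x.2.1)⟩) ?_ ?_ ?_ ?_ ?_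
  case refine_5 =>
    rintro ⟨⟨i, j⟩, k, l⟩ h
    obtain ⟨-, rfl⟩ : i + j = n ∧ k + l = i := by simpa using h
    simp only [pow_add]
    linear_combination Ring.choose s j * y ^ l * y ^ j * absorb k l
  all_goals
    rintro ⟨⟨i, j⟩, k, l⟩ h
    simp only [Finset.mem_sigma, HasAntidiagonal.mem_antidiagonal] at h ⊢
    grind

lemma jacobiP_eq_sum_antidiagonal {a b : ℝ} {n : ℕ} (ha : -1 < a) (hab : 0 < a + b + n + 1)
    (x : ℝ) :
    jacobiP a b n x = ∑ p ∈ antidiagonal n, Ring.choose (n + a) p.1 * Ring.choose (n + b) p.2 *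
      (((1 + x) / 2) ^ p.1 * ((x - 1) / 2) ^ p.2) := by
  rw [show (1 + x) / 2 = 1 + (x - 1) / 2 by ring, sum_choose_mul_choose_mul_one_add_pow,
    ← Finset.Nat.sum_antidiagonal_swap, jacobiP, Finset.mul_sum,
    Finset.Nat.sum_antidiagonal_eq_sum_range_succ_mk]
  refine Finset.sum_congr rfl fun m hm => ?_
  obtain ⟨k, rfl⟩ := Nat.exists_eq_add_of_le (Finset.mem_range_succ_iff.1 hm)
  have hΓ₁ := Gamma_add_one_eq_factorial_mul_choose_mul_Gamma (k := k)
    (r := (m + k : ℕ) + a) (by push_cast; linarith [m.cast_nonneg (α := ℝ)])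
  have hΓ₂ := Gamma_add_one_eq_factorial_mul_choose_mul_Gamma (k := m)
    (r := (m + k : ℕ) + a - k + ((m + k : ℕ) + b)) (by push_cast at hab ⊢; linarith)
  have hm0 : (0 : ℝ) < Real.Gamma (a + m + 1) :=
    Real.Gamma_pos_of_pos (by linarith [m.cast_nonneg (α := ℝ)])
  have hab0 := Real.Gamma_pos_of_pos hab
  have hchoose : ((m + k).choose m : ℝ) * m.factorial * k.factorial = (m + k).factorial := by
    simpa using congrArg (Nat.cast (R := ℝ))
      (Nat.choose_mul_factorial_mul_factorial (Nat.le_add_right m k))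
  simp only [Prod.swap_prod_mk, Nat.add_sub_cancel_left, ← hchoose]
  push_cast at hΓ₁ hΓ₂ hab0 ⊢
  ring_nf at hΓ₁ hΓ₂ hab0 hm0 ⊢
  rw [hΓ₁, hΓ₂]
  have hc : ((m + k).choose m : ℝ) ≠ 0 := by exact_mod_cast (Nat.choose_pos (by lia)).ne'
  field_simp

end JacobiSum

section Rodrigues

/-- The function whose `n`-th derivative gives `P_n^{(a,b)}` in Rodrigues' formula. -/
noncomputable def rodriguesFun (a b : ℝ) (n : ℕ) (z : ℂ) : ℂ :=
  (1 - z) ^ ((n + a : ℝ) : ℂ) * (1 + z) ^ ((n + b : ℝ) : ℂ)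

lemma hasDerivAt_add_mul_cpow {c ε z : ℂ} (α : ℂ) (hz : c + ε * z ∈ Complex.slitPlane) :
    HasDerivAt (fun z : ℂ => (c + ε * z) ^ α) (α * (c + ε * z) ^ (α - 1) * ε) z := by
  have hlin : HasDerivAt (fun z : ℂ => c + ε * z) ε z := by
    simpa using ((hasDerivAt_id z).const_mul ε).const_add c
  exact hlin.cpow_const hz

lemma iteratedDeriv_add_mul_cpow {c ε z : ℂ} (α : ℂ) (k : ℕ) (hz : c + ε * z ∈ Complex.slitPlane) :
    iteratedDeriv k (fun z : ℂ => (c + ε * z) ^ α) z =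
      ε ^ k * (k.factorial * Ring.choose α k) * (c + ε * z) ^ (α - k) := by
  induction k generalizing z with
  | zero => simp
  | succ k ih =>
    have hnhds : {z : ℂ | c + ε * z ∈ Complex.slitPlane} ∈ nhds z :=
      (Complex.isOpen_slitPlane.preimage (by fun_prop)).mem_nhds hz
    rw [iteratedDeriv_succ, (eventuallyEq_of_mem hnhds fun u hu => ih hu).deriv_eq,
      ((hasDerivAt_add_mul_cpow (α - k) hz).const_mul _).deriv, factorial_succ_mul_choose_succ,
      Nat.cast_add_one, sub_add_eq_sub_sub]
    ring

lemma iteratedDeriv_add_mul_cpow_ofReal {c ε x α β : ℝ} (k : ℕ) (hβ : α = k + β)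
    (hx : 0 < c + ε * x) :
    iteratedDeriv k (fun z : ℂ => ((c : ℂ) + ε * z) ^ (α : ℂ)) x =
      ((ε ^ k * (k.factorial * Ring.choose α k) * (c + ε * x) ^ β : ℝ) : ℂ) := by
  have hslit : (c : ℂ) + ε * x ∈ Complex.slitPlane := by
    exact_mod_cast Complex.ofReal_mem_slitPlane.2 hx
  have hexp : (α : ℂ) - k = (β : ℝ) := by rw [hβ]; push_cast; ring
  have hchoose : Ring.choose (α : ℂ) k = (Ring.choose α k : ℝ) :=
    (Ring.map_choose Complex.ofRealHom α k).symm
  rw [iteratedDeriv_add_mul_cpow _ _ hslit, hexp, hchoose]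
  push_cast [Complex.ofReal_cpow hx.le]
  rfl

lemma iteratedDeriv_rodriguesFun {a b x : ℝ} {n : ℕ} (ha : -1 < a) (hab : 0 < a + b + n + 1)
    (hx : x ∈ Set.Ioo (-1 : ℝ) 1) :
    iteratedDeriv n (rodriguesFun a b n) x =
      (((-2) ^ n * n.factorial * ((1 - x) ^ a * (1 + x) ^ b) * jacobiP a b n x : ℝ) : ℂ) := by
  have h1x : 0 < 1 + x := by linarith [hx.1]
  have hx1 : 0 < 1 - x := by linarith [hx.2]
  have hsmooth {ε α : ℝ} (h : 0 < 1 + ε * x) :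
      ContDiffAt ℂ n (fun z : ℂ => (((1 : ℝ) : ℂ) + ε * z) ^ (α : ℂ)) x := by
    refine AnalyticAt.contDiffAt (AnalyticAt.cpow (by fun_prop) analyticAt_const ?_)
    exact_mod_cast Complex.ofReal_mem_slitPlane.2 h
  have hfactor : rodriguesFun a b n = fun z : ℂ =>
      (((1 : ℝ) : ℂ) + ((-1 : ℝ) : ℂ) * z) ^ ((n + a : ℝ) : ℂ) *
        (((1 : ℝ) : ℂ) + ((1 : ℝ) : ℂ) * z) ^ ((n + b : ℝ) : ℂ) := by
    ext z
    simp [rodriguesFun, sub_eq_add_neg]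
  rw [hfactor, iteratedDeriv_fun_mul (hsmooth (by linarith)) (hsmooth (by linarith)),
    jacobiP_eq_sum_antidiagonal ha hab, Finset.Nat.sum_antidiagonal_eq_sum_range_succ_mk,
    Finset.mul_sum, Complex.ofReal_sum]
  refine Finset.sum_congr rfl fun i hi => ?_
  obtain ⟨j, rfl⟩ := Nat.exists_eq_add_of_le (Finset.mem_range_succ_iff.1 hi)
  rw [Nat.add_sub_cancel_left,
    iteratedDeriv_add_mul_cpow_ofReal (β := j + a) i (by push_cast; ring) (by linarith),
    iteratedDeriv_add_mul_cpow_ofReal (β := i + b) j (by push_cast; ring) (by linarith),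
    show 1 + -1 * x = 1 - x by ring, one_mul, one_pow, one_mul, Real.rpow_add hx1,
    Real.rpow_add h1x, Real.rpow_natCast, Real.rpow_natCast,
    show ((i + j).factorial : ℝ) = (i + j).choose i * i.factorial * j.factorial by
      simpa using congrArg (Nat.cast (R := ℝ))
        (Nat.choose_mul_factorial_mul_factorial (Nat.le_add_right i j)).symm]
  norm_cast
  have hsign : (-2 : ℝ) ^ (i + j) * (((1 + x) / 2) ^ i * ((x - 1) / 2) ^ j) =
      (-1) ^ i * ((1 - x) ^ j * (1 + x) ^ i) := by
    rw [pow_add, mul_mul_mul_comm, ← mul_pow, ← mul_pow,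
      show -2 * ((1 + x) / 2) = -1 * (1 + x) by ring, mul_pow,
      show -2 * ((x - 1) / 2) = 1 - x by ring]
    ring
  push_cast
  linear_combination (-((i + j).choose i : ℝ) * i.factorial * j.factorial * (1 - x) ^ a *
    (1 + x) ^ b * Ring.choose ((i : ℝ) + j + a) i * Ring.choose ((i : ℝ) + j + b) j) * hsign

end Rodrigues

section CircleRepresentation

open Metric ComplexConjugate

lemma intervalIntegral_eq_two_mul_re_of_conj {h : ℝ → ℂ} {c : ℝ} (hh : Continuous h)
    (hconj : ∀ φ, h (2 * c - φ) = conj (h φ)) :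
    ∫ φ in 0..2 * c, h φ = ((2 * (∫ φ in 0..c, h φ).re : ℝ) : ℂ) := by
  have hsecond : ∫ φ in c..2 * c, h φ = conj (∫ φ in 0..c, h φ) := by
    rw [← intervalIntegral_conj]
    simp_rw [← hconj]
    rw [intervalIntegral.integral_comp_sub_left h (2 * c)]
    congr 1 <;> ring
  rw [← intervalIntegral.integral_add_adjacent_intervals (hh.intervalIntegrable 0 c)
    (hh.intervalIntegrable c (2 * c)), hsecond, Complex.add_conj]

lemma circleMap_ofReal_two_pi_sub (c R φ : ℝ) :
    circleMap c R (2 * π - φ) = conj (circleMap c R φ) := by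
  simp only [circleMap, map_add, map_mul, Complex.conj_ofReal, ← Complex.exp_conj, Complex.conj_I]
  congr 2
  rw [Complex.exp_eq_exp_iff_exists_int]
  exact ⟨1, by push_cast; ring⟩

lemma circleIntegral_eq_two_mul_I_mul_re_of_conj {F : ℂ → ℂ} {c R : ℝ} (hR : 0 ≤ R)
    (hF : ContinuousOn F (sphere c R)) (hconj : ∀ z ∈ sphere (c : ℂ) R, F (conj z) = conj (F z)) :
    ∮ z in C(c, R), F z =
      2 * Complex.I * (∫ φ in 0..π, circleMap 0 R φ * F (circleMap c R φ)).re := by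
  have hcont : Continuous fun φ => circleMap 0 R φ * F (circleMap c R φ) :=
    (continuous_circleMap 0 R).mul (hF.comp_continuous (continuous_circleMap c R) fun φ =>
      circleMap_mem_sphere _ hR φ)
  have hsymm (φ : ℝ) : circleMap 0 R (2 * π - φ) * F (circleMap c R (2 * π - φ)) =
      conj (circleMap 0 R φ * F (circleMap c R φ)) := by
    rw [map_mul, ← hconj _ (circleMap_mem_sphere _ hR φ), ← circleMap_ofReal_two_pi_sub,
      ← Complex.ofReal_zero, ← circleMap_ofReal_two_pi_sub]
  simp only [circleIntegral, deriv_circleMap, smul_eq_mul, mul_right_comm _ Complex.I]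
  rw [intervalIntegral.integral_mul_const, intervalIntegral_eq_two_mul_re_of_conj hcont hsymm]
  push_cast
  ring

lemma re_one_add_nonneg {z : ℂ} (hz : ‖z‖ ≤ 1) : 0 ≤ (1 + z).re := by
  have := (abs_le.1 (Complex.abs_re_le_norm z)).1
  simp only [Complex.add_re, Complex.one_re]
  linarith

lemma diffContOnCl_one_add_mul_cpow {ε α : ℂ} (hε : ‖ε‖ ≤ 1) (hα : 0 < α.re) :
    DiffContOnCl ℂ (fun z : ℂ => (1 + ε * z) ^ α) (ball 0 1) where
  differentiableOn z hz := by
    have hlt : ‖ε * z‖ < 1 := by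
      rw [norm_mul]
      exact mul_lt_one_of_nonneg_of_lt_one_right hε (norm_nonneg z) (by simpa using hz)
    exact (hasDerivAt_add_mul_cpow α (Complex.mem_slitPlane_of_norm_lt_one
      hlt)).differentiableAt.differentiableWithinAt
  continuousOn := by
    rw [closure_ball _ one_ne_zero]
    intro z hz
    have hle : ‖ε * z‖ ≤ 1 := by
      rw [norm_mul]
      exact mul_le_one₀ hε (norm_nonneg z) (by simpa using hz)
    exact ((Complex.continuousAt_cpow_const_of_re_pos (Or.inl (re_one_add_nonneg hle)) hα).comp
      (f := fun z : ℂ => 1 + ε * z) (by fun_prop)).continuousWithinAt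

lemma diffContOnCl_rodriguesFun {a b : ℝ} {n : ℕ} (ha : 0 < n + a) (hb : 0 < n + b) :
    DiffContOnCl ℂ (rodriguesFun a b n) (ball 0 1) := by
  have hfactor : rodriguesFun a b n = fun z : ℂ =>
      (1 + -1 * z) ^ ((n + a : ℝ) : ℂ) • (1 + 1 * z) ^ ((n + b : ℝ) : ℂ) := by
    ext z
    simp [rodriguesFun, sub_eq_add_neg]
  rw [hfactor]
  exact (diffContOnCl_one_add_mul_cpow (by simp) (by simpa using ha)).smul
    (diffContOnCl_one_add_mul_cpow (by simp) (by simpa using hb))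

lemma conj_cpow_ofReal {z : ℂ} (hz : 0 ≤ z.re) (r : ℝ) :
    conj z ^ (r : ℂ) = conj (z ^ (r : ℂ)) := by
  have harg : z.arg ≠ π := fun h => absurd (Complex.arg_eq_pi_iff.1 h).1 hz.not_gt
  rw [Complex.conj_cpow z r harg, Complex.conj_ofReal]

lemma rodriguesFun_conj {a b : ℝ} {n : ℕ} {z : ℂ} (hz : ‖z‖ ≤ 1) :
    rodriguesFun a b n (conj z) = conj (rodriguesFun a b n z) := by
  have hsub : 0 ≤ (1 - z).re := by
    simpa [sub_eq_add_neg] using re_one_add_nonneg (z := -z) (by simpa using hz)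
  simp only [rodriguesFun, map_mul, ← conj_cpow_ofReal hsub,
    ← conj_cpow_ofReal (re_one_add_nonneg hz), map_add, map_sub, map_one]

/-- The integrand on the unit circle of Cauchy's formula for the `n`-th derivative at `x` of
`rodriguesFun a b n`, as a function of the angle. -/
noncomputable def jacobiCircleIntegrand (a b : ℝ) (n : ℕ) (x φ : ℝ) : ℂ :=
  circleMap 0 1 φ *
    ((circleMap 0 1 φ - x) ^ (-(n : ℤ) - 1) * rodriguesFun a b n (circleMap 0 1 φ))

variable {a b x : ℝ} {n : ℕ}

lemma ofReal_mem_ball_zero_one (hx : x ∈ Set.Ioo (-1 : ℝ) 1) : (x : ℂ) ∈ ball (0 : ℂ) 1 := by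
  simpa [abs_lt] using hx

lemma continuousOn_sub_zpow_mul_rodriguesFun (ha : 0 < n + a) (hb : 0 < n + b)
    (hx : x ∈ Set.Ioo (-1 : ℝ) 1) :
    ContinuousOn (fun z : ℂ => (z - x) ^ (-(n : ℤ) - 1) * rodriguesFun a b n z) (sphere 0 1) := by
  have hF := (diffContOnCl_rodriguesFun ha hb).continuousOn_ball.mono sphere_subset_closedBall
  refine ContinuousOn.mul (ContinuousOn.zpow₀ (by fun_prop) _ fun z hz => Or.inl ?_) hF
  exact sub_ne_zero.2 (sphere_disjoint_ball.ne_of_mem hz (ofReal_mem_ball_zero_one hx))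

lemma continuous_jacobiCircleIntegrand (ha : 0 < n + a) (hb : 0 < n + b)
    (hx : x ∈ Set.Ioo (-1 : ℝ) 1) : Continuous (jacobiCircleIntegrand a b n x) :=
  (continuous_circleMap 0 1).mul
    ((continuousOn_sub_zpow_mul_rodriguesFun ha hb hx).comp_continuous (continuous_circleMap 0 1)
      fun φ => circleMap_mem_sphere _ zero_le_one φ)

lemma jacobiP_eq_re_integral (ha : -1 < a) (hb : -1 < b) (hn : 1 ≤ n)
    (hx : x ∈ Set.Ioo (-1 : ℝ) 1) :
    π * ((-2) ^ n * ((1 - x) ^ a * (1 + x) ^ b)) * jacobiP a b n x =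
      (∫ φ in 0..π, jacobiCircleIntegrand a b n x φ).re := by
  have hn1 : (1 : ℝ) ≤ n := by exact_mod_cast hn
  have hna : 0 < n + a := by linarith
  have hnb : 0 < n + b := by linarith
  have hcauchy := circleIntegral_sub_zpow_smul_eq_iteratedDeriv n
    (diffContOnCl_rodriguesFun hna hnb) (ofReal_mem_ball_zero_one hx)
  have hsymm : (∮ z in C(0, 1), (z - x) ^ (-(n : ℤ) - 1) * rodriguesFun a b n z) =
      2 * Complex.I * (∫ φ in 0..π, jacobiCircleIntegrand a b n x φ).re := by
    simpa only [Complex.ofReal_zero, jacobiCircleIntegrand] using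
      circleIntegral_eq_two_mul_I_mul_re_of_conj (c := 0) zero_le_one
        (by simpa using continuousOn_sub_zpow_mul_rodriguesFun hna hnb hx) fun z hz => by
          rw [map_mul, map_zpow₀, map_sub, Complex.conj_ofReal, rodriguesFun_conj (by simp_all)]
  simp only [smul_eq_mul] at hcauchy
  rw [hsymm, iteratedDeriv_rodriguesFun ha (by linarith) hx] at hcauchy
  apply Complex.ofReal_injective
  have hfact : (n.factorial : ℂ) ≠ 0 := by exact_mod_cast n.factorial_ne_zero
  refine mul_left_cancel₀ (mul_ne_zero two_ne_zero Complex.I_ne_zero) (hcauchy.trans ?_).symm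
  push_cast
  field_simp

end CircleRepresentation

section SaddleCoordinate

/-- The factor `A = 1 - cos θ e^{-iz}` of `e^{iz} - cos θ = e^{iz} A`, whose real part is positive
for real `z`. -/
noncomputable def saddleDenom (θ : ℝ) (z : ℂ) : ℂ :=
  1 - Real.cos θ * Complex.exp (-(z * Complex.I))

/-- The coordinate `W` in the angle `z`, centred at the saddle point `θ`, in which the `n`-th power
in the circle integrand of `P_n(cos θ)` becomes `(1 - W ^ 2) ^ n` up to a constant factor. -/
noncomputable def saddleCoord (θ : ℝ) (z : ℂ) : ℂ :=
  √2 * Complex.sin ((z - θ) / 2) * saddleDenom θ z ^ (-(1 / 2) : ℂ)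

/-- Closed form of the derivative of `saddleCoord θ` at points where `saddleDenom θ z` is off the
branch cut. -/
noncomputable def saddleCoordDeriv (θ : ℝ) (z : ℂ) : ℂ :=
  √2 / 2 * saddleDenom θ z ^ (-(3 / 2) : ℂ) *
    (Complex.cos ((z - θ) / 2) - Real.cos θ * Complex.exp (-((z + θ) / 2 * Complex.I)))

variable {θ φ : ℝ} {z : ℂ}

lemma hasDerivAt_saddleDenom (θ : ℝ) (z : ℂ) :
    HasDerivAt (saddleDenom θ) (Real.cos θ * Complex.exp (-(z * Complex.I)) * Complex.I) z := by
  have hexponent : HasDerivAt (fun z : ℂ => -(z * Complex.I)) (-Complex.I) z := by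
    simpa using ((hasDerivAt_id z).mul_const Complex.I).fun_neg
  exact ((hexponent.cexp.const_mul (Real.cos θ : ℂ)).const_sub 1).congr_deriv (by ring)

lemma hasDerivAt_saddleCoord (hz : saddleDenom θ z ∈ Complex.slitPlane) :
    HasDerivAt (saddleCoord θ) (saddleCoordDeriv θ z) z := by
  have hhalf : HasDerivAt (fun z : ℂ => (z - θ) / 2) (1 / 2) z :=
    ((hasDerivAt_id z).sub_const _).div_const 2
  have hprod := (hhalf.csin.const_mul ((√2 : ℝ) : ℂ)).mul
    ((hasDerivAt_saddleDenom θ z).cpow_const (c := -(1 / 2)) hz)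
  refine hprod.congr_deriv ?_
  have hpow : saddleDenom θ z ^ (-(1 / 2) : ℂ) =
      saddleDenom θ z * saddleDenom θ z ^ (-(3 / 2) : ℂ) := by
    rw [show (-(1 / 2) : ℂ) = 1 + -(3 / 2) by norm_num,
      Complex.cpow_add _ _ (Complex.slitPlane_ne_zero hz), Complex.cpow_one]
  have hexp : Complex.exp (-((z + θ) / 2 * Complex.I)) = Complex.exp (-(z * Complex.I)) *
      (Complex.cos ((z - θ) / 2) + Complex.sin ((z - θ) / 2) * Complex.I) := by
    rw [← Complex.exp_mul_I, ← Complex.exp_add]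
    ring_nf
  rw [saddleCoordDeriv, hexp, hpow, show (-(1 / 2) - 1 : ℂ) = -(3 / 2) by norm_num]
  simp only [saddleDenom]
  ring

lemma saddleCoord_sq_mul_saddleDenom (hz : saddleDenom θ z ≠ 0) :
    saddleCoord θ z ^ 2 * saddleDenom θ z = 1 - Complex.cos (z - θ) := by
  have hpow : (saddleDenom θ z ^ (-(1 / 2) : ℂ)) ^ 2 = (saddleDenom θ z)⁻¹ := by
    rw [← Complex.cpow_nat_mul]
    norm_num [Complex.cpow_neg_one]
  have hsqrt : ((√2 : ℝ) : ℂ) ^ 2 = 2 := by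
    exact_mod_cast congrArg Complex.ofReal (Real.sq_sqrt zero_le_two)
  have hcos : Complex.cos (z - θ) = 1 - 2 * Complex.sin ((z - θ) / 2) ^ 2 := by
    rw [← Complex.cos_two_mul_eq_one_sub, mul_div_cancel₀ _ two_ne_zero]
  rw [saddleCoord, mul_pow, mul_pow, hpow, hsqrt, hcos, inv_mul_cancel_right₀ hz]
  ring

lemma exp_mul_saddleDenom (θ : ℝ) (z : ℂ) :
    Complex.exp (z * Complex.I) * saddleDenom θ z = Complex.exp (z * Complex.I) - Real.cos θ := by
  rw [saddleDenom, Complex.exp_neg]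
  field_simp

lemma one_sub_exp_sq_eq (hz : saddleDenom θ z ≠ 0) :
    1 - Complex.exp (z * Complex.I) ^ 2 = -2 * Complex.exp (θ * Complex.I) *
      (1 - saddleCoord θ z ^ 2) * (Complex.exp (z * Complex.I) - Real.cos θ) := by
  have hdiff : (1 - saddleCoord θ z ^ 2) * saddleDenom θ z =
      Complex.cos (z - θ) - Real.cos θ * Complex.exp (-(z * Complex.I)) := by
    rw [sub_mul, saddleCoord_sq_mul_saddleDenom hz, saddleDenom]
    ring
  rw [mul_assoc, ← exp_mul_saddleDenom, mul_left_comm _ (Complex.exp (z * Complex.I)), hdiff,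
    Complex.ofReal_cos]
  simp only [Complex.cos, neg_mul, sub_mul, neg_sub, Complex.exp_sub, Complex.exp_neg]
  field_simp
  ring

lemma abs_cos_lt_one (hθ : θ ∈ Set.Ioo 0 π) : |Real.cos θ| < 1 := by
  rw [← sq_lt_one_iff_abs_lt_one, Real.cos_sq']
  exact sub_lt_self 1 (pow_pos (Real.sin_pos_of_mem_Ioo hθ) 2)

lemma saddleDenom_re_pos (hθ : θ ∈ Set.Ioo 0 π) (φ : ℝ) : 0 < (saddleDenom θ φ).re := by
  have hnorm : ‖(Real.cos θ : ℂ) * Complex.exp (-(φ * Complex.I))‖ < 1 := by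
    rw [norm_mul, ← neg_mul, ← Complex.ofReal_neg, Complex.norm_exp_ofReal_mul_I, mul_one,
      Complex.norm_real]
    exact abs_cos_lt_one hθ
  rw [saddleDenom, Complex.sub_re, Complex.one_re]
  exact sub_pos.2 ((Complex.re_le_norm _).trans_lt hnorm)

lemma saddleDenom_mem_slitPlane (hθ : θ ∈ Set.Ioo 0 π) (φ : ℝ) :
    saddleDenom θ φ ∈ Complex.slitPlane :=
  Or.inl (saddleDenom_re_pos hθ φ)

lemma saddleDenom_ne_zero (hθ : θ ∈ Set.Ioo 0 π) (φ : ℝ) : saddleDenom θ φ ≠ 0 :=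
  Complex.slitPlane_ne_zero (saddleDenom_mem_slitPlane hθ φ)

lemma two_mul_sq_cpow_neg_half {r : ℝ} (hr : 0 ≤ r) :
    ((2 * r ^ 2 : ℝ) : ℂ) ^ (-(1 / 2) : ℂ) = ((√2 * r)⁻¹ : ℝ) := by
  have hreal : (2 * r ^ 2) ^ (-(1 / 2) : ℝ) = (√2 * r)⁻¹ := by
    rw [Real.rpow_neg (by positivity), ← Real.sqrt_eq_rpow, Real.sqrt_mul zero_le_two,
      Real.sqrt_sq hr]
  rw [← hreal, Complex.ofReal_cpow (by positivity)]
  push_cast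
  rfl

lemma sin_half_pos (hθ : θ ∈ Set.Ioo 0 π) : 0 < Real.sin (θ / 2) :=
  Real.sin_pos_of_pos_of_lt_pi (by linarith [hθ.1]) (by linarith [hθ.1, hθ.2])

lemma cos_half_pos (hθ : θ ∈ Set.Ioo 0 π) : 0 < Real.cos (θ / 2) :=
  Real.cos_pos_of_mem_Ioo ⟨by linarith [hθ.1, hθ.2], by linarith [hθ.1, hθ.2]⟩

lemma saddleDenom_zero (θ : ℝ) : saddleDenom θ 0 = ((2 * Real.sin (θ / 2) ^ 2 : ℝ) : ℂ) := by
  have hcos := Real.cos_two_mul_eq_one_sub (θ / 2)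
  rw [mul_div_cancel₀ _ two_ne_zero] at hcos
  rw [saddleDenom, hcos]
  simp

lemma saddleDenom_pi (θ : ℝ) : saddleDenom θ π = ((2 * Real.cos (θ / 2) ^ 2 : ℝ) : ℂ) := by
  have hcos := Real.cos_two_mul (θ / 2)
  rw [mul_div_cancel₀ _ two_ne_zero] at hcos
  rw [saddleDenom, hcos, Complex.exp_neg, Complex.exp_pi_mul_I]
  push_cast
  ring

lemma saddleCoord_zero (hθ : θ ∈ Set.Ioo 0 π) : saddleCoord θ 0 = -1 := by
  have hsin := sin_half_pos hθ
  have hnum : Complex.sin ((0 - θ) / 2) = (-Real.sin (θ / 2) : ℝ) := by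
    push_cast
    rw [zero_sub, neg_div, Complex.sin_neg]
  rw [saddleCoord, saddleDenom_zero, two_mul_sq_cpow_neg_half hsin.le, hnum, ← Complex.ofReal_mul,
    ← Complex.ofReal_mul, ← Complex.ofReal_one, ← Complex.ofReal_neg]
  congr 1
  field_simp

lemma saddleCoord_pi (hθ : θ ∈ Set.Ioo 0 π) : saddleCoord θ π = 1 := by
  have hcos := cos_half_pos hθ
  have hnum : Complex.sin ((π - θ) / 2) = (Real.cos (θ / 2) : ℝ) := by
    push_cast
    rw [sub_div, Complex.sin_pi_div_two_sub]
  rw [saddleCoord, saddleDenom_pi, two_mul_sq_cpow_neg_half hcos.le, hnum]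
  norm_cast
  field_simp

lemma continuousAt_saddleDenom (θ : ℝ) (z : ℂ) :
    ContinuousAt (fun p : ℝ × ℂ => saddleDenom p.1 p.2) (θ, z) := by
  unfold saddleDenom
  fun_prop

lemma continuousAt_saddleCoord (hz : saddleDenom θ z ∈ Complex.slitPlane) :
    ContinuousAt (fun p : ℝ × ℂ => saddleCoord p.1 p.2) (θ, z) := by
  have hpow := (continuousAt_saddleDenom θ z).cpow (g := fun _ => (-(1 / 2) : ℂ))
    continuousAt_const hz
  unfold saddleCoord
  fun_prop

lemma continuousAt_saddleCoordDeriv (hz : saddleDenom θ z ∈ Complex.slitPlane) :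
    ContinuousAt (fun p : ℝ × ℂ => saddleCoordDeriv p.1 p.2) (θ, z) := by
  have hpow := (continuousAt_saddleDenom θ z).cpow (g := fun _ => (-(3 / 2) : ℂ))
    continuousAt_const hz
  unfold saddleCoordDeriv
  fun_prop

lemma continuous_saddleCoordDeriv_ofReal (hθ : θ ∈ Set.Ioo 0 π) :
    Continuous fun φ : ℝ => saddleCoordDeriv θ φ :=
  continuous_iff_continuousAt.2 fun φ =>
    (continuousAt_saddleCoordDeriv (saddleDenom_mem_slitPlane hθ φ)).comp
      (f := fun φ : ℝ => (θ, (φ : ℂ))) (by fun_prop)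

lemma hasDerivAt_saddleCoord_ofReal (hθ : θ ∈ Set.Ioo 0 π) (φ : ℝ) :
    HasDerivAt (fun φ : ℝ => saddleCoord θ φ) (saddleCoordDeriv θ φ) φ :=
  (hasDerivAt_saddleCoord (saddleDenom_mem_slitPlane hθ φ)).comp_ofReal

lemma continuous_saddleCoord_ofReal (hθ : θ ∈ Set.Ioo 0 π) :
    Continuous fun φ : ℝ => saddleCoord θ φ :=
  continuous_iff_continuousAt.2 fun φ => (hasDerivAt_saddleCoord_ofReal hθ φ).continuousAt

lemma integral_comp_saddleCoord_mul_deriv {f : ℂ → ℂ} (hf : Differentiable ℂ f)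
    (hθ : θ ∈ Set.Ioo 0 π) :
    ∫ φ in 0..π, f (saddleCoord θ φ) * saddleCoordDeriv θ φ = ∫ s in -1..1, f (s : ℝ) := by
  obtain ⟨F, hF⟩ := hf.isExactOn_univ
  replace hF : ∀ z, HasDerivAt F (f z) z := fun z => hF z (Set.mem_univ z)
  have hW := continuous_saddleCoord_ofReal hθ
  have hW' := continuous_saddleCoordDeriv_ofReal hθ
  have hleft : ∫ φ in 0..π, f (saddleCoord θ φ) * saddleCoordDeriv θ φ = F 1 - F (-1) := by
    rw [integral_eq_sub_of_hasDerivAt (f := fun φ : ℝ => F (saddleCoord θ φ))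
      (fun φ _ => (hF _).comp φ (hasDerivAt_saddleCoord_ofReal hθ φ))
      (((hf.continuous.comp hW).mul hW').intervalIntegrable 0 π), saddleCoord_pi hθ,
      Complex.ofReal_zero, saddleCoord_zero hθ]
  have hright : ∫ s in -1..1, f (s : ℝ) = F 1 - F (-1) := by
    rw [integral_eq_sub_of_hasDerivAt (f := fun s : ℝ => F s) (fun s _ => (hF s).comp_ofReal)
      ((hf.continuous.comp Complex.continuous_ofReal).intervalIntegrable (-1) 1),
      Complex.ofReal_neg, Complex.ofReal_one]
  rw [hleft, hright]

lemma integral_one_sub_saddleCoord_sq_pow_mul_deriv (hθ : θ ∈ Set.Ioo 0 π) (n : ℕ) :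
    ∫ φ in 0..π, (1 - saddleCoord θ φ ^ 2) ^ n * saddleCoordDeriv θ φ =
      ((∫ s in (-1 : ℝ)..1, (1 - s ^ 2) ^ n : ℝ) : ℂ) := by
  rw [integral_comp_saddleCoord_mul_deriv (f := fun z => (1 - z ^ 2) ^ n) (by fun_prop) hθ,
    ← intervalIntegral.integral_ofReal]
  simp

lemma integral_one_sub_saddleCoord_sq_pow_mul_coord_mul_deriv (hθ : θ ∈ Set.Ioo 0 π) (n : ℕ) :
    ∫ φ in 0..π, (1 - saddleCoord θ φ ^ 2) ^ n * (saddleCoord θ φ * saddleCoordDeriv θ φ) = 0 := by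
  simp_rw [← mul_assoc]
  rw [integral_comp_saddleCoord_mul_deriv (f := fun z => (1 - z ^ 2) ^ n * z) (by fun_prop) hθ]
  have hodd := intervalIntegral.integral_comp_neg (a := -1) (b := 1)
    fun s : ℝ => (1 - (s : ℂ) ^ 2) ^ n * s
  simp only [Complex.ofReal_neg, neg_sq, mul_neg, intervalIntegral.integral_neg, neg_neg] at hodd
  exact self_eq_neg.1 hodd.symm

end SaddleCoordinate

section SaddleAmplitude

lemma cpow_natCast_add {w s : ℂ} {n : ℕ} (hn : n ≠ 0) (hs : n + s ≠ 0) :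
    w ^ (n + s) = w ^ n * w ^ s := by
  rcases eq_or_ne w 0 with rfl | hw
  · rw [Complex.zero_cpow hs, zero_pow hn, zero_mul]
  · rw [Complex.cpow_add _ _ hw, Complex.cpow_natCast]

/-- The weight `(1 - x) ^ a * (1 + x) ^ b` of the Jacobi polynomials at `x = cos θ`. -/
noncomputable def jacobiWeightCos (a b θ : ℝ) : ℝ :=
  (1 - Real.cos θ) ^ a * (1 + Real.cos θ) ^ b

/-- The amplitude `g` for which `π P_n(cos θ)` is the real part of
`e^{inθ} ∫ (1 - W ^ 2) ^ n * g` over the upper half circle, with `W = saddleCoord θ`. -/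
noncomputable def saddleAmplitude (a b θ : ℝ) (z : ℂ) : ℂ :=
  (1 - Complex.exp (z * Complex.I)) ^ (a : ℂ) * (1 + Complex.exp (z * Complex.I)) ^ (b : ℂ) /
    (jacobiWeightCos a b θ * saddleDenom θ z)

variable {a b θ : ℝ} {n : ℕ}

lemma cos_mem_Ioo (hθ : θ ∈ Set.Ioo 0 π) : Real.cos θ ∈ Set.Ioo (-1 : ℝ) 1 :=
  abs_lt.1 (abs_cos_lt_one hθ)

lemma jacobiWeightCos_pos (a b : ℝ) (hθ : θ ∈ Set.Ioo 0 π) : 0 < jacobiWeightCos a b θ := by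
  obtain ⟨hlower, hupper⟩ := cos_mem_Ioo hθ
  exact mul_pos (Real.rpow_pos_of_pos (by linarith) a) (Real.rpow_pos_of_pos (by linarith) b)

lemma rodriguesFun_eq (hn : n ≠ 0) (ha : (n + a : ℂ) ≠ 0) (hb : (n + b : ℂ) ≠ 0) (z : ℂ) :
    rodriguesFun a b n z =
      ((1 - z) ^ n * (1 + z) ^ n) * ((1 - z) ^ (a : ℂ) * (1 + z) ^ (b : ℂ)) := by
  rw [rodriguesFun]
  push_cast
  rw [cpow_natCast_add hn ha, cpow_natCast_add hn hb, mul_mul_mul_comm]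

lemma jacobiCircleIntegrand_cos_eq (hn : n ≠ 0) (ha : (n + a : ℂ) ≠ 0) (hb : (n + b : ℂ) ≠ 0)
    (hθ : θ ∈ Set.Ioo 0 π) (φ : ℝ) :
    jacobiCircleIntegrand a b n (Real.cos θ) φ =
      ((-2) ^ n * jacobiWeightCos a b θ : ℝ) *
        (Complex.exp (θ * Complex.I) ^ n *
          ((1 - saddleCoord θ φ ^ 2) ^ n * saddleAmplitude a b θ φ)) := by
  have hdenom := saddleDenom_ne_zero hθ φ
  have hweight : (jacobiWeightCos a b θ : ℂ) ≠ 0 := by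
    exact_mod_cast (jacobiWeightCos_pos a b hθ).ne'
  have hcircle : circleMap 0 1 φ = Complex.exp (φ * Complex.I) := by simp [circleMap]
  have hne : Complex.exp (φ * Complex.I) - Real.cos θ ≠ 0 := by
    rw [← exp_mul_saddleDenom]
    exact mul_ne_zero (Complex.exp_ne_zero _) hdenom
  have hpow : (1 - Complex.exp (φ * Complex.I)) ^ n * (1 + Complex.exp (φ * Complex.I)) ^ n =
      (-2) ^ n * Complex.exp (θ * Complex.I) ^ n * (1 - saddleCoord θ φ ^ 2) ^ n *
        (Complex.exp (φ * Complex.I) - Real.cos θ) ^ n := by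
    rw [← mul_pow, ← mul_pow, ← mul_pow, ← mul_pow, ← one_sub_exp_sq_eq hdenom]
    ring
  have hfactor := exp_mul_saddleDenom θ φ
  rw [jacobiCircleIntegrand, hcircle, rodriguesFun_eq hn ha hb, hpow, saddleAmplitude,
    zpow_sub_one₀ hne, zpow_neg, zpow_natCast, ← hfactor]
  push_cast
  rw [← hfactor] at hne
  field_simp

lemma natCast_add_ofReal_ne_zero {r : ℝ} (hn : 1 ≤ n) (hr : -1 < r) : (n + r : ℂ) ≠ 0 := by
  have : (1 : ℝ) ≤ n := by exact_mod_cast hn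
  exact_mod_cast (by linarith : 0 < n + r).ne'

lemma continuous_one_sub_saddleCoord_sq_pow_mul_saddleAmplitude (ha : -1 < a) (hb : -1 < b)
    (hn : 1 ≤ n) (hθ : θ ∈ Set.Ioo 0 π) :
    Continuous fun φ : ℝ => (1 - saddleCoord θ φ ^ 2) ^ n * saddleAmplitude a b θ φ := by
  have hn1 : (1 : ℝ) ≤ n := by exact_mod_cast hn
  have hscale : (((-2) ^ n * jacobiWeightCos a b θ : ℝ) : ℂ) ≠ 0 :=
    Complex.ofReal_ne_zero.2 (mul_ne_zero (by simp) (jacobiWeightCos_pos a b hθ).ne')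
  have hexp : Complex.exp (θ * Complex.I) ^ n ≠ 0 := pow_ne_zero n (Complex.exp_ne_zero _)
  have hcont := continuous_jacobiCircleIntegrand (a := a) (b := b) (n := n) (by linarith)
    (by linarith) (cos_mem_Ioo hθ)
  rw [funext (jacobiCircleIntegrand_cos_eq (by lia) (natCast_add_ofReal_ne_zero hn ha)
    (natCast_add_ofReal_ne_zero hn hb) hθ)] at hcont
  exact (continuous_const_smul_iff₀ hexp).1 ((continuous_const_smul_iff₀ hscale).1 hcont)

lemma jacobiP_cos_eq_re_integral (ha : -1 < a) (hb : -1 < b) (hn : 1 ≤ n)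
    (hθ : θ ∈ Set.Ioo 0 π) :
    π * jacobiP a b n (Real.cos θ) = (Complex.exp (θ * Complex.I) ^ n *
      ∫ φ in 0..π, (1 - saddleCoord θ φ ^ 2) ^ n * saddleAmplitude a b θ φ).re := by
  have hscale : (-2) ^ n * jacobiWeightCos a b θ ≠ 0 :=
    mul_ne_zero (by simp) (jacobiWeightCos_pos a b hθ).ne'
  have hcircle := jacobiP_eq_re_integral ha hb hn (cos_mem_Ioo hθ)
  simp only [jacobiCircleIntegrand_cos_eq (by lia) (natCast_add_ofReal_ne_zero hn ha)
    (natCast_add_ofReal_ne_zero hn hb) hθ, intervalIntegral.integral_const_mul,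
    Complex.re_ofReal_mul] at hcircle
  refine mul_left_cancel₀ hscale (Eq.trans ?_ hcircle)
  rw [jacobiWeightCos]
  ring

end SaddleAmplitude

section WallisIntegral

lemma integral_sin_pow_mul_integral_sin_pow_succ (k : ℕ) :
    (∫ x in 0..π, Real.sin x ^ k) * ∫ x in 0..π, Real.sin x ^ (k + 1) = 2 * π / (k + 1) := by
  induction k with
  | zero =>
    simp only [pow_zero, zero_add, pow_one, integral_one, integral_sin, Real.cos_zero, Real.cos_pi]
    push_cast
    ring
  | succ k ih =>
    rw [integral_sin_pow (n := k)]
    simp only [Real.sin_zero, Real.sin_pi, ne_eq, Nat.add_eq_zero_iff, one_ne_zero, and_false,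
      not_false_eq_true, zero_pow, zero_mul, sub_self, zero_div, zero_add]
    rw [mul_left_comm, mul_comm (∫ x in 0..π, Real.sin x ^ (k + 1)), ih]
    push_cast
    field_simp
    ring

lemma integral_one_sub_sq_pow_eq_integral_sin_pow (n : ℕ) :
    ∫ s in (-1 : ℝ)..1, (1 - s ^ 2) ^ n = ∫ x in 0..π, Real.sin x ^ (2 * n + 1) := by
  simpa using (integral_sin_pow_odd_mul_cos_pow (a := 0) (b := π) n 0).symm

lemma integral_one_sub_sq_pow_le {n : ℕ} (hn : 1 ≤ n) :
    ∫ s in (-1 : ℝ)..1, (1 - s ^ 2) ^ n ≤ √(π / n) := by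
  have : (0 : ℝ) < n := by exact_mod_cast hn
  rw [integral_one_sub_sq_pow_eq_integral_sin_pow]
  apply Real.le_sqrt_of_sq_le
  calc (∫ x in 0..π, Real.sin x ^ (2 * n + 1)) ^ 2
      ≤ (∫ x in 0..π, Real.sin x ^ (2 * n)) * ∫ x in 0..π, Real.sin x ^ (2 * n + 1) := by
        rw [sq]
        exact mul_le_mul_of_nonneg_right (integral_sin_pow_succ_le _) (integral_sin_pow_pos _).le
    _ = 2 * π / (2 * n + 1) := by
        rw [integral_sin_pow_mul_integral_sin_pow_succ]
        push_cast
        rfl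
    _ ≤ 2 * π / (2 * n) := by gcongr; linarith
    _ = π / n := mul_div_mul_left _ _ two_ne_zero

lemma le_integral_one_sub_sq_pow (n : ℕ) :
    √(π / (n + 1)) ≤ ∫ s in (-1 : ℝ)..1, (1 - s ^ 2) ^ n := by
  rw [integral_one_sub_sq_pow_eq_integral_sin_pow, Real.sqrt_le_left
    (integral_sin_pow_pos _).le]
  calc π / (n + 1)
      = (∫ x in 0..π, Real.sin x ^ (2 * n + 1)) * ∫ x in 0..π, Real.sin x ^ (2 * n + 1 + 1) := by
        rw [integral_sin_pow_mul_integral_sin_pow_succ]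
        push_cast
        field_simp
        ring
    _ ≤ (∫ x in 0..π, Real.sin x ^ (2 * n + 1)) ^ 2 := by
        rw [sq]
        exact mul_le_mul_of_nonneg_left (integral_sin_pow_succ_le _) (integral_sin_pow_pos _).le

lemma sqrt_sub_sqrt_le_div {x y : ℝ} (hy : 0 ≤ y) (hyx : y ≤ x) : √x - √y ≤ (x - y) / √x := by
  rcases (hy.trans hyx).eq_or_lt with rfl | hx
  · simp
  rw [le_div_iff₀ (Real.sqrt_pos.2 hx)]
  nlinarith [Real.sq_sqrt hx.le, Real.sq_sqrt hy, Real.sqrt_le_sqrt hyx, Real.sqrt_nonneg y]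

lemma rpow_neg_three_halves {x : ℝ} (hx : 0 ≤ x) : x ^ (-(3 : ℝ) / 2) = (x * √x)⁻¹ := by
  rw [neg_div, Real.rpow_neg hx, show (3 : ℝ) / 2 = 1 + 1 / 2 by norm_num,
    Real.rpow_add_of_nonneg hx zero_le_one (by norm_num), Real.rpow_one, Real.sqrt_eq_rpow]

lemma abs_integral_one_sub_sq_pow_sub_sqrt_le {n : ℕ} (hn : 1 ≤ n) :
    |(∫ s in (-1 : ℝ)..1, (1 - s ^ 2) ^ n) - √(π / n)| ≤ √π * (n : ℝ) ^ (-(3 : ℝ) / 2) := by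
  have hn0 : (0 : ℝ) < n := by exact_mod_cast hn
  rw [abs_sub_comm, abs_of_nonneg (sub_nonneg.2 (integral_one_sub_sq_pow_le hn))]
  calc √(π / n) - ∫ s in (-1 : ℝ)..1, (1 - s ^ 2) ^ n
      ≤ √(π / n) - √(π / (n + 1)) := by gcongr; exact le_integral_one_sub_sq_pow n
    _ ≤ (π / n - π / (n + 1)) / √(π / n) :=
        sqrt_sub_sqrt_le_div (by positivity) (by gcongr; linarith)
    _ ≤ π / n ^ 2 / √(π / n) := by
        gcongr
        rw [div_sub_div _ _ (by positivity) (by positivity),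
          div_le_div_iff₀ (by positivity) (by positivity)]
        nlinarith [Real.pi_pos, mul_pos Real.pi_pos hn0]
    _ = √π * (n : ℝ) ^ (-(3 : ℝ) / 2) := by
        rw [rpow_neg_three_halves hn0.le, Real.sqrt_div Real.pi_nonneg]
        field_simp
        rw [Real.sq_sqrt hn0.le, Real.sq_sqrt Real.pi_nonneg, mul_comm]

end WallisIntegral

section GaussianMoment

lemma sq_mul_exp_neg_mul_sq_le {l : ℝ} (hl : 0 < l) (u : ℝ) :
    u ^ 2 * Real.exp (-l * u ^ 2) ≤ 2 / l * Real.exp (-(l / 2) * u ^ 2) := by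
  have hsplit : Real.exp (-(l / 2) * u ^ 2) =
      Real.exp (l / 2 * u ^ 2) * Real.exp (-l * u ^ 2) := by
    rw [← Real.exp_add]
    ring_nf
  rw [hsplit, ← mul_assoc]
  gcongr
  calc u ^ 2 = 2 / l * (l / 2 * u ^ 2) := by field_simp
    _ ≤ 2 / l * Real.exp (l / 2 * u ^ 2) := by
        gcongr
        linarith [Real.add_one_le_exp (l / 2 * u ^ 2)]

lemma integral_sq_mul_exp_neg_mul_sq_le {α β l : ℝ} (hαβ : α ≤ β) (hl : 0 < l) (θ : ℝ) :
    ∫ φ in α..β, (φ - θ) ^ 2 * Real.exp (-l * (φ - θ) ^ 2) ≤ 2 / l * √(2 * π / l) := by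
  have hint : Integrable fun φ : ℝ => 2 / l * Real.exp (-(l / 2) * (φ - θ) ^ 2) :=
    ((integrable_exp_neg_mul_sq (half_pos hl)).comp_sub_right θ).const_mul _
  calc ∫ φ in α..β, (φ - θ) ^ 2 * Real.exp (-l * (φ - θ) ^ 2)
      ≤ ∫ φ in α..β, 2 / l * Real.exp (-(l / 2) * (φ - θ) ^ 2) :=
        intervalIntegral.integral_mono_on hαβ (Continuous.intervalIntegrable (by fun_prop) _ _)
          hint.intervalIntegrable fun φ _ => sq_mul_exp_neg_mul_sq_le hl (φ - θ)
    _ ≤ ∫ φ : ℝ, 2 / l * Real.exp (-(l / 2) * (φ - θ) ^ 2) := by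
        rw [intervalIntegral.integral_of_le hαβ]
        exact setIntegral_le_integral hint (Eventually.of_forall fun φ => by positivity)
    _ = 2 / l * √(2 * π / l) := by
        rw [MeasureTheory.integral_const_mul,
          integral_sub_right_eq_self (fun φ : ℝ => Real.exp (-(l / 2) * φ ^ 2)) θ,
          integral_gaussian]
        congr 2
        field_simp

variable {𝕜 : Type*} [RCLike 𝕜]

lemma norm_pow_mul_le_mul_sq_mul_exp {x y : 𝕜} {c r u C : ℝ} {n : ℕ} (hn : 1 ≤ n) (hc : 0 ≤ c)
    (hu : |u| ≤ r) (hx : ‖x‖ ≤ Real.exp (-c * u ^ 2)) (hxy : ‖x * y‖ ≤ C * u ^ 2) :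
    ‖x ^ n * y‖ ≤ C * Real.exp (c * r ^ 2) * (u ^ 2 * Real.exp (-(c * n) * u ^ 2)) := by
  obtain ⟨m, rfl⟩ := Nat.exists_eq_succ_of_ne_zero (Nat.one_le_iff_ne_zero.1 hn)
  have hbound : 0 ≤ C * u ^ 2 := (norm_nonneg _).trans hxy
  calc ‖x ^ (m + 1) * y‖ = ‖x‖ ^ m * ‖x * y‖ := by rw [pow_succ, mul_assoc, norm_mul, norm_pow]
    _ ≤ Real.exp (-c * u ^ 2) ^ m * (C * u ^ 2) := by gcongr
    _ = C * u ^ 2 * (Real.exp (c * u ^ 2) * Real.exp (-(c * (m + 1 : ℕ)) * u ^ 2)) := by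
        rw [← Real.exp_nat_mul, ← Real.exp_add, mul_comm]
        push_cast
        ring_nf
    _ ≤ C * u ^ 2 * (Real.exp (c * r ^ 2) * Real.exp (-(c * (m + 1 : ℕ)) * u ^ 2)) := by
        have := sq_le_sq.2 (hu.trans (le_abs_self r))
        gcongr
    _ = _ := by ring

lemma norm_integral_pow_mul_le {p f : ℝ → 𝕜} {α β c C θ : ℝ} {n : ℕ} (hn : 1 ≤ n) (hc : 0 < c)
    (hC : 0 ≤ C) (hθ : θ ∈ Set.Icc α β)
    (hp : ∀ φ ∈ Set.Icc α β, ‖p φ‖ ≤ Real.exp (-c * (φ - θ) ^ 2))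
    (hpf : ∀ φ ∈ Set.Icc α β, ‖p φ * f φ‖ ≤ C * (φ - θ) ^ 2) :
    ‖∫ φ in α..β, p φ ^ n * f φ‖ ≤
      C * Real.exp (c * (β - α) ^ 2) * (2 / c * √(2 * π / c)) * (n : ℝ) ^ (-(3 : ℝ) / 2) := by
  have hn0 : (0 : ℝ) < n := by exact_mod_cast hn
  have hαβ : α ≤ β := hθ.1.trans hθ.2
  have hpointwise (φ : ℝ) (hφ : φ ∈ Set.Icc α β) : ‖p φ ^ n * f φ‖ ≤
      C * Real.exp (c * (β - α) ^ 2) * ((φ - θ) ^ 2 * Real.exp (-(c * n) * (φ - θ) ^ 2)) :=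
    norm_pow_mul_le_mul_sq_mul_exp hn hc.le
      (abs_sub_le_iff.2 ⟨by linarith [hφ.2, hθ.1], by linarith [hφ.1, hθ.2]⟩) (hp φ hφ) (hpf φ hφ)
  calc ‖∫ φ in α..β, p φ ^ n * f φ‖
      ≤ ∫ φ in α..β, C * Real.exp (c * (β - α) ^ 2) *
          ((φ - θ) ^ 2 * Real.exp (-(c * n) * (φ - θ) ^ 2)) :=
        intervalIntegral.norm_integral_le_of_norm_le hαβ
          (Eventually.of_forall fun φ hφ => hpointwise φ (Set.Ioc_subset_Icc_self hφ))
          (Continuous.intervalIntegrable (by fun_prop) _ _)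
    _ ≤ C * Real.exp (c * (β - α) ^ 2) * (2 / (c * n) * √(2 * π / (c * n))) := by
        rw [intervalIntegral.integral_const_mul]
        gcongr
        exact integral_sq_mul_exp_neg_mul_sq_le hαβ (by positivity) θ
    _ = C * Real.exp (c * (β - α) ^ 2) * (2 / c * √(2 * π / c)) * (n : ℝ) ^ (-(3 : ℝ) / 2) := by
        rw [rpow_neg_three_halves hn0.le, ← div_div (2 * π), Real.sqrt_div (by positivity)]
        field_simp

end GaussianMoment

section SaddleBounds

variable {a b θ : ℝ} {K : Set ℝ}

lemma norm_saddleDenom_sq (θ φ : ℝ) :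
    ‖saddleDenom θ φ‖ ^ 2 = Real.sin φ ^ 2 + (Real.cos φ - Real.cos θ) ^ 2 := by
  have hparts : saddleDenom θ φ = ((1 - Real.cos θ * Real.cos φ : ℝ) : ℂ) +
      ((Real.cos θ * Real.sin φ : ℝ) : ℂ) * Complex.I := by
    rw [saddleDenom, ← neg_mul, ← Complex.ofReal_neg, Complex.exp_ofReal_mul_I, Real.cos_neg,
      Real.sin_neg]
    push_cast
    ring
  rw [hparts, Complex.sq_norm, Complex.normSq_add_mul_I]
  linear_combination (Real.cos θ ^ 2 - 1) * Real.sin_sq_add_cos_sq φ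

lemma norm_saddleDenom_le_two (θ φ : ℝ) : ‖saddleDenom θ φ‖ ≤ 2 := by
  calc ‖saddleDenom θ φ‖
      ≤ ‖(1 : ℂ)‖ + ‖(Real.cos θ : ℂ) * Complex.exp (-(φ * Complex.I))‖ := norm_sub_le _ _
    _ = 1 + |Real.cos θ| := by
        rw [norm_mul, ← neg_mul, ← Complex.ofReal_neg, Complex.norm_exp_ofReal_mul_I, mul_one,
          Complex.norm_real, Real.norm_eq_abs, norm_one]
    _ ≤ 2 := by linarith [Real.abs_cos_le_one θ]

lemma norm_one_sub_saddleCoord_sq (hθ : θ ∈ Set.Ioo 0 π) (φ : ℝ) :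
    ‖1 - saddleCoord θ φ ^ 2‖ =
      ‖1 - Complex.exp (φ * Complex.I)‖ * ‖1 + Complex.exp (φ * Complex.I)‖ /
        (2 * ‖saddleDenom θ φ‖) := by
  have hdenom := saddleDenom_ne_zero hθ φ
  rw [← norm_mul, show (1 - Complex.exp (φ * Complex.I)) * (1 + Complex.exp (φ * Complex.I)) =
    1 - Complex.exp (φ * Complex.I) ^ 2 by ring, one_sub_exp_sq_eq hdenom, ← exp_mul_saddleDenom]
  simp only [norm_mul, norm_neg, Complex.norm_exp_ofReal_mul_I, Complex.norm_ofNat]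
  field_simp

lemma norm_one_sub_exp_mul_norm_one_add_exp (φ : ℝ) :
    ‖1 - Complex.exp (φ * Complex.I)‖ * ‖1 + Complex.exp (φ * Complex.I)‖ =
      2 * |Real.sin φ| := by
  have hsq : (1 - Complex.exp (φ * Complex.I)) * (1 + Complex.exp (φ * Complex.I)) =
      -(Complex.exp (Complex.I * (2 * φ : ℝ)) - 1) := by
    rw [show Complex.I * ((2 * φ : ℝ) : ℂ) = (2 : ℕ) * (φ * Complex.I) by push_cast; ring,
      Complex.exp_nat_mul]
    ring
  rw [← norm_mul, hsq, norm_neg, Complex.norm_exp_I_mul_ofReal_sub_one,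
    mul_div_cancel_left₀ _ two_ne_zero, norm_mul, Real.norm_ofNat, Real.norm_eq_abs]

lemma norm_one_sub_saddleCoord_sq_sq_le (hθ : θ ∈ Set.Ioo 0 π) (φ : ℝ) :
    ‖1 - saddleCoord θ φ ^ 2‖ ^ 2 ≤ 1 - (Real.cos φ - Real.cos θ) ^ 2 / 4 := by
  have hpos : 0 < ‖saddleDenom θ φ‖ := norm_pos_iff.2 (saddleDenom_ne_zero hθ φ)
  calc ‖1 - saddleCoord θ φ ^ 2‖ ^ 2 = Real.sin φ ^ 2 / ‖saddleDenom θ φ‖ ^ 2 := by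
        rw [norm_one_sub_saddleCoord_sq hθ, norm_one_sub_exp_mul_norm_one_add_exp,
          mul_div_mul_left _ _ two_ne_zero, div_pow, sq_abs]
    _ = 1 - (Real.cos φ - Real.cos θ) ^ 2 / ‖saddleDenom θ φ‖ ^ 2 := by
        rw [eq_sub_iff_add_eq, ← add_div, ← norm_saddleDenom_sq, div_self (by positivity)]
    _ ≤ 1 - (Real.cos φ - Real.cos θ) ^ 2 / 4 := by
        gcongr
        nlinarith [norm_saddleDenom_le_two θ φ]

lemma mul_sq_sub_le_sq_cos_sub_cos {η φ : ℝ} (hη : 0 ≤ η) (hsin : η ≤ Real.sin ((φ + θ) / 2))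
    (hφ : |φ - θ| ≤ π) :
    4 * (η ^ 2 / π ^ 2 * (φ - θ) ^ 2) ≤ (Real.cos φ - Real.cos θ) ^ 2 := by
  have hjordan : |φ - θ| / π ≤ |Real.sin ((φ - θ) / 2)| := by
    convert Real.mul_abs_le_abs_sin (x := (φ - θ) / 2) _ using 1
    · rw [abs_div, abs_two]
      field_simp
    · rw [abs_div, abs_two]
      linarith
  calc 4 * (η ^ 2 / π ^ 2 * (φ - θ) ^ 2) = 4 * (η ^ 2 * (|φ - θ| / π) ^ 2) := by
        rw [div_pow, sq_abs]
        ring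
    _ ≤ 4 * (Real.sin ((φ + θ) / 2) ^ 2 * |Real.sin ((φ - θ) / 2)| ^ 2) := by gcongr
    _ = (Real.cos φ - Real.cos θ) ^ 2 := by
        rw [Real.cos_sub_cos, sq_abs]
        ring

lemma exists_norm_one_sub_saddleCoord_sq_le_exp (hK : IsCompact K) (hKπ : K ⊆ Set.Ioo 0 π) :
    ∃ c > 0, ∀ θ ∈ K, ∀ φ ∈ Set.Icc 0 π,
      ‖1 - saddleCoord θ φ ^ 2‖ ≤ Real.exp (-c * (φ - θ) ^ 2) := by
  obtain ⟨η, hη, hsin⟩ := (hK.prod (isCompact_Icc (a := 0) (b := π))).exists_forall_le'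
    (f := fun p : ℝ × ℝ => Real.sin ((p.2 + p.1) / 2)) (by fun_prop) (a := 0) fun p hp =>
      Real.sin_pos_of_pos_of_lt_pi (by linarith [(hKπ hp.1).1, hp.2.1])
        (by linarith [(hKπ hp.1).2, hp.2.2])
  refine ⟨η ^ 2 / (2 * π ^ 2), by positivity, fun θ hθ φ hφ => ?_⟩
  have hθπ := hKπ hθ
  refine (sq_le_sq₀ (norm_nonneg _) (Real.exp_pos _).le).1 ?_
  calc ‖1 - saddleCoord θ φ ^ 2‖ ^ 2 ≤ 1 - (Real.cos φ - Real.cos θ) ^ 2 / 4 :=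
        norm_one_sub_saddleCoord_sq_sq_le hθπ φ
    _ ≤ -(η ^ 2 / π ^ 2 * (φ - θ) ^ 2) + 1 := by
        linarith [mul_sq_sub_le_sq_cos_sub_cos hη.le (hsin (θ, φ) ⟨hθ, hφ⟩)
          (abs_sub_le_iff.2 ⟨by linarith [hφ.2, hθπ.1], by linarith [hφ.1, hθπ.2]⟩)]
    _ ≤ Real.exp (-(η ^ 2 / π ^ 2 * (φ - θ) ^ 2)) := Real.add_one_le_exp _
    _ = Real.exp (-(η ^ 2 / (2 * π ^ 2)) * (φ - θ) ^ 2) ^ 2 := by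
        rw [← Real.exp_nat_mul]
        congr 1
        push_cast
        field_simp

lemma mul_rpow_le_two_rpow {t : ℝ} (ht : 0 ≤ t) (ht2 : t ≤ 2) (ha : -1 < a) :
    t * t ^ a ≤ 2 ^ (a + 1) := by
  rw [← Real.rpow_one_add' ht (by linarith), add_comm]
  exact Real.rpow_le_rpow ht ht2 (by linarith)

lemma norm_one_add_le_two {z : ℂ} (hz : ‖z‖ ≤ 1) : ‖1 + z‖ ≤ 2 :=
  (norm_add_le _ _).trans (by rw [norm_one]; linarith)

-- For negative `a` or `b` the amplitude blows up at `φ = 0` or `φ = π`; one factor `1 - W ^ 2`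
-- compensates for this.
lemma norm_one_sub_saddleCoord_sq_mul_saddleAmplitude_le (ha : -1 < a) (hb : -1 < b)
    (hθ : θ ∈ Set.Ioo 0 π) (φ : ℝ) :
    ‖(1 - saddleCoord θ φ ^ 2) * saddleAmplitude a b θ φ‖ ≤
      2 ^ (a + b + 1) / (jacobiWeightCos a b θ * ‖saddleDenom θ φ‖ ^ 2) := by
  have hζ : ‖Complex.exp (φ * Complex.I)‖ = 1 := Complex.norm_exp_ofReal_mul_I φ
  have hweight := jacobiWeightCos_pos a b hθ
  have hsub : ‖1 - Complex.exp (φ * Complex.I)‖ ≤ 2 := by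
    simpa [sub_eq_add_neg] using norm_one_add_le_two (z := -Complex.exp (φ * Complex.I))
      (by rw [norm_neg, hζ])
  have hadd : ‖1 + Complex.exp (φ * Complex.I)‖ ≤ 2 := norm_one_add_le_two hζ.le
  calc ‖(1 - saddleCoord θ φ ^ 2) * saddleAmplitude a b θ φ‖
      = ‖1 - Complex.exp (φ * Complex.I)‖ * ‖1 - Complex.exp (φ * Complex.I)‖ ^ a *
          (‖1 + Complex.exp (φ * Complex.I)‖ * ‖1 + Complex.exp (φ * Complex.I)‖ ^ b) / 2 /
          (jacobiWeightCos a b θ * ‖saddleDenom θ φ‖ ^ 2) := by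
        rw [norm_mul, norm_one_sub_saddleCoord_sq hθ, saddleAmplitude, norm_div, norm_mul,
          norm_mul, Complex.norm_cpow_real, Complex.norm_cpow_real, Complex.norm_real,
          Real.norm_of_nonneg hweight.le]
        field_simp
    _ ≤ 2 ^ (a + 1) * 2 ^ (b + 1) / 2 / (jacobiWeightCos a b θ * ‖saddleDenom θ φ‖ ^ 2) := by
        gcongr
        · exact mul_rpow_le_two_rpow (norm_nonneg _) hsub ha
        · exact mul_rpow_le_two_rpow (norm_nonneg _) hadd hb
    _ = 2 ^ (a + b + 1) / (jacobiWeightCos a b θ * ‖saddleDenom θ φ‖ ^ 2) := by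
        congr 1
        rw [← Real.rpow_add two_pos, ← Real.rpow_sub_one two_ne_zero]
        ring_nf

lemma continuousOn_jacobiWeightCos (a b : ℝ) : ContinuousOn (jacobiWeightCos a b) (Set.Ioo 0 π) :=
  fun θ hθ => by
    obtain ⟨hlower, hupper⟩ := cos_mem_Ioo hθ
    have hsub : ContinuousAt (fun θ => (1 - Real.cos θ) ^ a) θ :=
      ContinuousAt.rpow_const (by fun_prop) (Or.inl (by linarith))
    have hadd : ContinuousAt (fun θ => (1 + Real.cos θ) ^ b) θ :=
      ContinuousAt.rpow_const (by fun_prop) (Or.inl (by linarith))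
    exact (hsub.mul hadd).continuousWithinAt

lemma exists_norm_one_sub_saddleCoord_sq_mul_saddleAmplitude_le (ha : -1 < a) (hb : -1 < b)
    (hK : IsCompact K) (hKπ : K ⊆ Set.Ioo 0 π) :
    ∃ M, ∀ θ ∈ K, ∀ φ ∈ Set.Icc 0 π,
      ‖(1 - saddleCoord θ φ ^ 2) * saddleAmplitude a b θ φ‖ ≤ M := by
  have hcont : ContinuousOn
      (fun p : ℝ × ℝ => jacobiWeightCos a b p.1 * ‖saddleDenom p.1 p.2‖ ^ 2)
      (K ×ˢ Set.Icc 0 π) := by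
    refine ((continuousOn_jacobiWeightCos a b).comp continuousOn_fst fun p hp => hKπ hp.1).mul ?_
    unfold saddleDenom
    fun_prop
  obtain ⟨m, hm, hle⟩ := (hK.prod (isCompact_Icc (a := 0) (b := π))).exists_forall_le' hcont
    (a := 0) fun p hp => mul_pos (jacobiWeightCos_pos a b (hKπ hp.1))
      (pow_pos (norm_pos_iff.2 (saddleDenom_ne_zero (hKπ hp.1) p.2)) 2)
  refine ⟨2 ^ (a + b + 1) / m, fun θ hθ φ hφ => ?_⟩
  refine (norm_one_sub_saddleCoord_sq_mul_saddleAmplitude_le ha hb (hKπ hθ) φ).trans ?_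
  gcongr
  exact hle (θ, φ) ⟨hθ, hφ⟩

end SaddleBounds

section DoubleZero

variable {q v : ℂ → ℂ} {c z : ℂ} {r m M L : ℝ}

lemma norm_dslope_le_div (hq : DifferentiableOn ℂ q (Metric.ball c r)) (hqc : q c = 0)
    (hM : ∀ z ∈ Metric.ball c r, ‖q z‖ ≤ M) (hz : z ∈ Metric.ball c r) :
    ‖dslope q c z‖ ≤ M / r :=
  Complex.norm_dslope_le_div_of_mapsTo_ball hq
    (fun y hy => by rw [hqc, mem_closedBall_zero_iff]; exact hM y hy) hz

lemma norm_le_mul_sq_of_deriv_eq_zero (hq : DifferentiableOn ℂ q (Metric.ball c r))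
    (hqc : q c = 0) (hderiv : deriv q c = 0) (hM : ∀ z ∈ Metric.ball c r, ‖q z‖ ≤ M)
    (hz : z ∈ Metric.ball c r) : ‖q z‖ ≤ M / r / r * ‖z - c‖ ^ 2 := by
  have hball : Metric.ball c r ∈ nhds c :=
    Metric.ball_mem_nhds c (Metric.nonempty_ball.1 ⟨z, hz⟩)
  have hslope : dslope q c c = 0 := by rw [dslope_same, hderiv]
  have hfactor : q z = (z - c) * ((z - c) * dslope (dslope q c) c z) := by
    have houter := sub_smul_dslope (dslope q c) c z
    have hinner := sub_smul_dslope q c z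
    rw [hslope, sub_zero, smul_eq_mul] at houter
    rw [hqc, sub_zero, smul_eq_mul] at hinner
    rw [houter, hinner]
  calc ‖q z‖ = ‖dslope (dslope q c) c z‖ * ‖z - c‖ ^ 2 := by
        rw [hfactor, norm_mul, norm_mul]
        ring
    _ ≤ M / r / r * ‖z - c‖ ^ 2 := by
        gcongr
        exact norm_dslope_le_div ((Complex.differentiableOn_dslope hball).2 hq) hslope
          (fun y hy => norm_dslope_le_div hq hqc hM hy) hz

lemma norm_deriv_div_deriv_le (hr : 0 < r) (hm : 0 < m)
    (hq : DifferentiableOn ℂ q (Metric.ball c r)) (hqc : q c = 0)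
    (hM : ∀ z ∈ Metric.ball c r, ‖q z‖ ≤ M) (hderiv : m ≤ ‖deriv v c‖) :
    ‖deriv q c / deriv v c‖ ≤ M / r / m := by
  have hbound := norm_dslope_le_div hq hqc hM (Metric.mem_ball_self hr)
  rw [dslope_same] at hbound
  rw [norm_div]
  exact div_le_div₀ ((norm_nonneg _).trans hbound) hbound hm hderiv

lemma norm_sub_deriv_div_deriv_mul_le (hm : 0 < m)
    (hq : DifferentiableOn ℂ q (Metric.ball c r)) (hv : DifferentiableOn ℂ v (Metric.ball c r))
    (hqc : q c = 0) (hvc : v c = 0) (hM : ∀ z ∈ Metric.ball c r, ‖q z‖ ≤ M)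
    (hL : ∀ z ∈ Metric.ball c r, ‖v z‖ ≤ L) (hderiv : m ≤ ‖deriv v c‖)
    (hz : z ∈ Metric.ball c r) :
    ‖q z - deriv q c / deriv v c * v z‖ ≤ (M + M / r / m * L) / r / r * ‖z - c‖ ^ 2 := by
  have hr : 0 < r := Metric.nonempty_ball.1 ⟨z, hz⟩
  have hball : Metric.ball c r ∈ nhds c := Metric.ball_mem_nhds c hr
  have hcoeff := norm_deriv_div_deriv_le hr hm hq hqc hM hderiv
  refine norm_le_mul_sq_of_deriv_eq_zero
    (q := fun z => q z - deriv q c / deriv v c * v z) (hq.sub (hv.const_mul _)) ?_ ?_ ?_ hz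
  · simp only [hqc, hvc, mul_zero, sub_zero]
  · rw [deriv_fun_sub (hq.differentiableAt hball) ((hv.differentiableAt hball).const_mul _),
      deriv_const_mul _ (hv.differentiableAt hball),
      div_mul_cancel₀ _ (norm_pos_iff.1 (hm.trans_le hderiv)), sub_self]
  · intro y hy
    refine (norm_sub_le _ _).trans (add_le_add (hM y hy) ?_)
    rw [norm_mul]
    exact mul_le_mul hcoeff (hL y hy) (norm_nonneg _) ((norm_nonneg _).trans hcoeff)

end DoubleZero

section LocalExpansion

/-- The open set of pairs `(θ, z)` near which `saddleAmplitude` and `saddleCoord` involve only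
principal powers off the branch cut. -/
def saddleRegion : Set (ℝ × ℂ) :=
  {p | p.1 ∈ Set.Ioo 0 π ∧ saddleDenom p.1 p.2 ∈ Complex.slitPlane ∧
    1 - Complex.exp (p.2 * Complex.I) ∈ Complex.slitPlane ∧
    1 + Complex.exp (p.2 * Complex.I) ∈ Complex.slitPlane}

/-- The coefficient `c` in the expansion `g = c * W' + d * (W * W') + O((z - θ) ^ 2)` of the
amplitude `g` at the saddle point. -/
noncomputable def saddleLeadCoeff (a b θ : ℝ) : ℂ :=
  saddleAmplitude a b θ θ / saddleCoordDeriv θ θ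

/-- The remainder `g - c * W' - d * (W * W')` of the expansion of the amplitude `g` at the saddle
point, where `c` is `saddleLeadCoeff`. -/
noncomputable def saddleRemainder (a b θ : ℝ) (d z : ℂ) : ℂ :=
  saddleAmplitude a b θ z - saddleLeadCoeff a b θ * saddleCoordDeriv θ z -
    d * (saddleCoord θ z * saddleCoordDeriv θ z)

variable {a b θ : ℝ} {z : ℂ} {K : Set ℝ}

lemma isOpen_saddleRegion : IsOpen saddleRegion := by
  have hdenom : Continuous fun p : ℝ × ℂ => saddleDenom p.1 p.2 :=
    continuous_iff_continuousAt.2 fun p => continuousAt_saddleDenom p.1 p.2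
  exact (isOpen_Ioo.preimage continuous_fst).inter <|
    (Complex.isOpen_slitPlane.preimage hdenom).inter <|
    (Complex.isOpen_slitPlane.preimage (by fun_prop)).inter <|
    Complex.isOpen_slitPlane.preimage (by fun_prop)

lemma mk_ofReal_mem_saddleRegion (hθ : θ ∈ Set.Ioo 0 π) : (θ, (θ : ℂ)) ∈ saddleRegion := by
  obtain ⟨hlower, hupper⟩ := cos_mem_Ioo hθ
  refine ⟨hθ, saddleDenom_mem_slitPlane hθ θ, Or.inl ?_, Or.inl ?_⟩
  · rw [Complex.sub_re, Complex.one_re, Complex.exp_ofReal_mul_I_re]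
    linarith
  · rw [Complex.add_re, Complex.one_re, Complex.exp_ofReal_mul_I_re]
    linarith

lemma continuousAt_saddleAmplitude (hz : (θ, z) ∈ saddleRegion) :
    ContinuousAt (fun p : ℝ × ℂ => saddleAmplitude a b p.1 p.2) (θ, z) := by
  obtain ⟨hθ, hdenom, hsub, hadd⟩ := hz
  have hpowSub : ContinuousAt (fun p : ℝ × ℂ => (1 - Complex.exp (p.2 * Complex.I)) ^ (a : ℂ))
      (θ, z) := ContinuousAt.cpow (by fun_prop) continuousAt_const hsub
  have hpowAdd : ContinuousAt (fun p : ℝ × ℂ => (1 + Complex.exp (p.2 * Complex.I)) ^ (b : ℂ))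
      (θ, z) := ContinuousAt.cpow (by fun_prop) continuousAt_const hadd
  have hweight : ContinuousAt (fun p : ℝ × ℂ => (jacobiWeightCos a b p.1 : ℂ)) (θ, z) :=
    Complex.continuous_ofReal.continuousAt.comp <|
      ((continuousOn_jacobiWeightCos a b).continuousAt (Ioo_mem_nhds hθ.1 hθ.2)).comp
        continuousAt_fst
  exact (hpowSub.mul hpowAdd).div (hweight.mul (continuousAt_saddleDenom θ z)) <|
    mul_ne_zero (Complex.ofReal_ne_zero.2 (jacobiWeightCos_pos a b hθ).ne')
      (Complex.slitPlane_ne_zero hdenom)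

lemma differentiableAt_saddleAmplitude (hz : (θ, z) ∈ saddleRegion) :
    DifferentiableAt ℂ (saddleAmplitude a b θ) z := by
  obtain ⟨hθ, hdenom, hsub, hadd⟩ := hz
  have hpowSub : DifferentiableAt ℂ (fun z => (1 - Complex.exp (z * Complex.I)) ^ (a : ℂ)) z :=
    DifferentiableAt.cpow (by fun_prop) (differentiableAt_const _) hsub
  have hpowAdd : DifferentiableAt ℂ (fun z => (1 + Complex.exp (z * Complex.I)) ^ (b : ℂ)) z :=
    DifferentiableAt.cpow (by fun_prop) (differentiableAt_const _) hadd
  exact (hpowSub.mul hpowAdd).div ((hasDerivAt_saddleDenom θ z).differentiableAt.const_mul _) <|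
    mul_ne_zero (Complex.ofReal_ne_zero.2 (jacobiWeightCos_pos a b hθ).ne')
      (Complex.slitPlane_ne_zero hdenom)

lemma differentiableAt_saddleCoordDeriv (hz : saddleDenom θ z ∈ Complex.slitPlane) :
    DifferentiableAt ℂ (saddleCoordDeriv θ) z := by
  have hpow := (hasDerivAt_saddleDenom θ z).differentiableAt.cpow
    (differentiableAt_const (-(3 / 2) : ℂ)) hz
  unfold saddleCoordDeriv
  fun_prop

lemma saddleCoord_self (θ : ℝ) : saddleCoord θ θ = 0 := by simp [saddleCoord]

lemma saddleCoordDeriv_self (hθ : θ ∈ Set.Ioo 0 π) :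
    saddleCoordDeriv θ θ = √2 / 2 * saddleDenom θ θ ^ (-(1 / 2) : ℂ) := by
  have hdenom := saddleDenom_ne_zero hθ θ
  rw [show (-(1 / 2) : ℂ) = -(3 / 2) + 1 by norm_num, Complex.cpow_add _ _ hdenom,
    Complex.cpow_one, saddleCoordDeriv, sub_self, zero_div, Complex.cos_zero, add_self_div_two,
    ← saddleDenom, mul_assoc]

lemma half_le_norm_saddleCoordDeriv_self (hθ : θ ∈ Set.Ioo 0 π) :
    1 / 2 ≤ ‖saddleCoordDeriv θ θ‖ := by
  have hpos : 0 < ‖saddleDenom θ θ‖ := norm_pos_iff.2 (saddleDenom_ne_zero hθ θ)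
  have hexponent : (-(1 / 2) : ℂ) = ((-(1 / 2) : ℝ) : ℂ) := by push_cast; rfl
  calc (1 / 2 : ℝ) = √2 / 2 * 2 ^ (-(1 / 2) : ℝ) := by
        rw [Real.rpow_neg zero_le_two, ← Real.sqrt_eq_rpow]
        field_simp
    _ ≤ √2 / 2 * ‖saddleDenom θ θ‖ ^ (-(1 / 2) : ℝ) := by
        exact mul_le_mul_of_nonneg_left (Real.rpow_le_rpow_of_nonpos hpos
          (norm_saddleDenom_le_two θ θ) (by norm_num)) (by positivity)
    _ = ‖saddleCoordDeriv θ θ‖ := by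
        rw [saddleCoordDeriv_self hθ, hexponent, norm_mul, Complex.norm_cpow_real, norm_div,
          Complex.norm_real, Real.norm_of_nonneg (Real.sqrt_nonneg 2), Complex.norm_ofNat]

lemma deriv_saddleCoord_mul_saddleCoordDeriv_self (hθ : θ ∈ Set.Ioo 0 π) :
    deriv (fun z => saddleCoord θ z * saddleCoordDeriv θ z) θ = saddleCoordDeriv θ θ ^ 2 := by
  have hslit := saddleDenom_mem_slitPlane hθ θ
  rw [((hasDerivAt_saddleCoord hslit).fun_mul
    (differentiableAt_saddleCoordDeriv hslit).hasDerivAt).deriv, saddleCoord_self, zero_mul,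
    add_zero, sq]

lemma exists_saddleRegion_tube_bound (a b : ℝ) (hK : IsCompact K) (hKπ : K ⊆ Set.Ioo 0 π) :
    ∃ r > 0, ∃ M, ∀ θ ∈ K, ∀ z ∈ Metric.ball (θ : ℂ) r, (θ, z) ∈ saddleRegion ∧
      ‖saddleAmplitude a b θ z‖ ≤ M ∧ ‖saddleCoord θ z‖ ≤ M ∧ ‖saddleCoordDeriv θ z‖ ≤ M := by
  set diag : Set (ℝ × ℂ) := (fun θ : ℝ => (θ, (θ : ℂ))) '' K
  have hcompact : IsCompact diag := hK.image (by fun_prop)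
  obtain ⟨r, hr, htube⟩ := hcompact.exists_cthickening_subset_open isOpen_saddleRegion
    (Set.image_subset_iff.2 fun θ hθ => mk_ofReal_mem_saddleRegion (hKπ hθ))
  obtain ⟨M, hM⟩ := (hcompact.cthickening (r := r)).exists_bound_of_continuousOn
    (f := fun p => (saddleAmplitude a b p.1 p.2, saddleCoord p.1 p.2, saddleCoordDeriv p.1 p.2))
    fun p hp => ((continuousAt_saddleAmplitude (htube hp)).prodMk
      ((continuousAt_saddleCoord (htube hp).2.1).prodMk
        (continuousAt_saddleCoordDeriv (htube hp).2.1))).continuousWithinAt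
  refine ⟨r, hr, M, fun θ hθ z hz => ?_⟩
  have hmem : (θ, z) ∈ Metric.cthickening r diag :=
    Metric.mem_cthickening_of_dist_le _ (θ, (θ : ℂ)) _ _ ⟨θ, hθ, rfl⟩ <| by
      rw [Prod.dist_eq, dist_self]
      exact max_le hr.le (Metric.mem_ball.1 hz).le
  simpa only [norm_prod_le_iff] using And.intro (htube hmem) (hM _ hmem)

lemma norm_saddleLeadCoeff_le {M : ℝ} (hθ : θ ∈ Set.Ioo 0 π) (hM : ‖saddleAmplitude a b θ θ‖ ≤ M) :
    ‖saddleLeadCoeff a b θ‖ ≤ 2 * M := by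
  have hlower := half_le_norm_saddleCoordDeriv_self hθ
  rw [saddleLeadCoeff, norm_div, div_le_iff₀ (by linarith)]
  nlinarith [norm_nonneg (saddleAmplitude a b θ θ)]

lemma exists_norm_saddleRemainder_le_of_bound {r M : ℝ} (hr : 0 < r) (hθ : θ ∈ Set.Ioo 0 π)
    (hregion : ∀ z ∈ Metric.ball (θ : ℂ) r, (θ, z) ∈ saddleRegion)
    (hM : ∀ z ∈ Metric.ball (θ : ℂ) r, ‖saddleAmplitude a b θ z‖ ≤ M ∧ ‖saddleCoord θ z‖ ≤ M ∧
      ‖saddleCoordDeriv θ z‖ ≤ M) :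
    ∃ d, ‖d‖ ≤ (M + 2 * M * M) / r / (1 / 4) ∧ ∀ z ∈ Metric.ball (θ : ℂ) r,
      ‖saddleRemainder a b θ d z‖ ≤
        (M + 2 * M * M + (M + 2 * M * M) / r / (1 / 4) * (M * M)) / r / r * ‖z - θ‖ ^ 2 := by
  set q := fun z => saddleAmplitude a b θ z - saddleLeadCoeff a b θ * saddleCoordDeriv θ z with hq
  set v := fun z => saddleCoord θ z * saddleCoordDeriv θ z with hv
  have hlead := norm_saddleLeadCoeff_le hθ (hM θ (Metric.mem_ball_self hr)).1
  have hM0 : 0 ≤ M := (norm_nonneg _).trans (hM θ (Metric.mem_ball_self hr)).1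
  have hlower := half_le_norm_saddleCoordDeriv_self hθ
  have hcoordDeriv : DifferentiableOn ℂ (saddleCoordDeriv θ) (Metric.ball (θ : ℂ) r) := fun z hz =>
    (differentiableAt_saddleCoordDeriv (hregion z hz).2.1).differentiableWithinAt
  have hqdiff : DifferentiableOn ℂ q (Metric.ball (θ : ℂ) r) := DifferentiableOn.sub
    (fun z hz => (differentiableAt_saddleAmplitude (hregion z hz)).differentiableWithinAt)
    (hcoordDeriv.const_mul _)
  have hvdiff : DifferentiableOn ℂ v (Metric.ball (θ : ℂ) r) := DifferentiableOn.mul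
    (fun z hz => (hasDerivAt_saddleCoord
      (hregion z hz).2.1).differentiableAt.differentiableWithinAt) hcoordDeriv
  have hqθ : q θ = 0 := by
    rw [hq]
    exact sub_eq_zero.2 (div_mul_cancel₀ _ (norm_pos_iff.1 (by linarith))).symm
  have hvθ : v θ = 0 := by simp only [hv, saddleCoord_self, zero_mul]
  have hqM : ∀ z ∈ Metric.ball (θ : ℂ) r, ‖q z‖ ≤ M + 2 * M * M := fun z hz =>
    (norm_sub_le _ _).trans (add_le_add (hM z hz).1
      ((norm_mul_le _ _).trans (mul_le_mul hlead (hM z hz).2.2 (norm_nonneg _) (by positivity))))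
  have hvM : ∀ z ∈ Metric.ball (θ : ℂ) r, ‖v z‖ ≤ M * M := fun z hz =>
    (norm_mul_le _ _).trans (mul_le_mul (hM z hz).2.1 (hM z hz).2.2 (norm_nonneg _) hM0)
  have hvderiv : 1 / 4 ≤ ‖deriv v θ‖ := by
    rw [hv, deriv_saddleCoord_mul_saddleCoordDeriv_self hθ, norm_pow]
    nlinarith
  refine ⟨deriv q θ / deriv v θ, ?_, fun z hz => ?_⟩
  · exact norm_deriv_div_deriv_le hr (by norm_num) hqdiff hqθ hqM hvderiv
  · have hbound :=
      norm_sub_deriv_div_deriv_mul_le (by norm_num) hqdiff hvdiff hqθ hvθ hqM hvM hvderiv hz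
    rw [saddleRemainder]
    exact hbound

lemma exists_norm_saddleRemainder_le_near (a b : ℝ) (hK : IsCompact K) (hKπ : K ⊆ Set.Ioo 0 π) :
    ∃ r > 0, ∃ C D, ∀ θ ∈ K, ‖saddleLeadCoeff a b θ‖ ≤ D ∧ ∃ d, ‖d‖ ≤ D ∧
      ∀ z ∈ Metric.ball (θ : ℂ) r, ‖saddleRemainder a b θ d z‖ ≤ C * ‖z - θ‖ ^ 2 := by
  obtain ⟨r, hr, M, hM⟩ := exists_saddleRegion_tube_bound a b hK hKπ
  refine ⟨r, hr, (M + 2 * M * M + (M + 2 * M * M) / r / (1 / 4) * (M * M)) / r / r,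
    max (2 * M) ((M + 2 * M * M) / r / (1 / 4)), fun θ hθ => ?_⟩
  obtain ⟨d, hd, hremainder⟩ := exists_norm_saddleRemainder_le_of_bound hr (hKπ hθ)
    (fun z hz => (hM θ hθ z hz).1) (fun z hz => (hM θ hθ z hz).2)
  have hlead := norm_saddleLeadCoeff_le (hKπ hθ) (hM θ hθ θ (Metric.mem_ball_self hr)).2.1
  exact ⟨hlead.trans (le_max_left _ _), d, hd.trans (le_max_right _ _), hremainder⟩

lemma exists_norm_saddleCoord_le (hK : IsCompact K) (hKπ : K ⊆ Set.Ioo 0 π) :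
    ∃ M, ∀ θ ∈ K, ∀ φ ∈ Set.Icc 0 π, ‖saddleCoord θ φ‖ ≤ M ∧ ‖saddleCoordDeriv θ φ‖ ≤ M := by
  obtain ⟨M, hM⟩ := (hK.prod (isCompact_Icc (a := 0) (b := π))).exists_bound_of_continuousOn
    (f := fun p : ℝ × ℝ => (saddleCoord p.1 p.2, saddleCoordDeriv p.1 p.2)) fun p hp => by
      have hslit := saddleDenom_mem_slitPlane (hKπ hp.1) p.2
      exact (((continuousAt_saddleCoord hslit).prodMk (continuousAt_saddleCoordDeriv hslit)).comp
        (f := fun p : ℝ × ℝ => (p.1, (p.2 : ℂ))) (by fun_prop)).continuousWithinAt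
  exact ⟨M, fun θ hθ φ hφ => norm_prod_le_iff.1 (hM (θ, φ) ⟨hθ, hφ⟩)⟩

lemma exists_norm_one_sub_saddleCoord_sq_mul_saddleRemainder_le_const (ha : -1 < a) (hb : -1 < b)
    (hK : IsCompact K) (hKπ : K ⊆ Set.Ioo 0 π) (D : ℝ) :
    ∃ M, ∀ θ ∈ K, ‖saddleLeadCoeff a b θ‖ ≤ D → ∀ d, ‖d‖ ≤ D → ∀ φ ∈ Set.Icc 0 π,
      ‖(1 - saddleCoord θ φ ^ 2) * saddleRemainder a b θ d φ‖ ≤ M := by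
  obtain ⟨G, hG⟩ := exists_norm_one_sub_saddleCoord_sq_mul_saddleAmplitude_le ha hb hK hKπ
  obtain ⟨N, hN⟩ := exists_norm_saddleCoord_le hK hKπ
  refine ⟨G + (1 + N ^ 2) * (D * N) + (1 + N ^ 2) * (D * (N * N)),
    fun θ hθ hlead d hd φ hφ => ?_⟩
  obtain ⟨hcoord, hderiv⟩ := hN θ hθ φ hφ
  have hN0 : 0 ≤ N := (norm_nonneg _).trans hcoord
  have hD0 : 0 ≤ D := (norm_nonneg _).trans hd
  have hbase : ‖1 - saddleCoord θ φ ^ 2‖ ≤ 1 + N ^ 2 :=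
    (norm_sub_le _ _).trans (by rw [norm_one, norm_pow]; gcongr)
  rw [saddleRemainder, mul_sub, mul_sub]
  refine (norm_sub_le _ _).trans (add_le_add ((norm_sub_le _ _).trans
    (add_le_add (hG θ hθ φ hφ) ?_)) ?_)
  all_goals
    simp only [norm_mul]
    gcongr

lemma exists_norm_one_sub_saddleCoord_sq_mul_saddleRemainder_le (ha : -1 < a) (hb : -1 < b)
    (hK : IsCompact K) (hKπ : K ⊆ Set.Ioo 0 π) :
    ∃ C, 0 ≤ C ∧ ∃ D, ∀ θ ∈ K, ‖saddleLeadCoeff a b θ‖ ≤ D ∧ ∃ d, ∀ φ ∈ Set.Icc 0 π,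
      ‖(1 - saddleCoord θ φ ^ 2) * saddleRemainder a b θ d φ‖ ≤ C * (φ - θ) ^ 2 := by
  obtain ⟨r, hr, C, D, hnear⟩ := exists_norm_saddleRemainder_le_near a b hK hKπ
  obtain ⟨M, hM⟩ := exists_norm_one_sub_saddleCoord_sq_mul_saddleRemainder_le_const ha hb hK hKπ D
  obtain ⟨c, hc, hexp⟩ := exists_norm_one_sub_saddleCoord_sq_le_exp hK hKπ
  refine ⟨max 0 (max C (M / r ^ 2)), le_max_left _ _, D, fun θ hθ => ?_⟩
  obtain ⟨hlead, d, hd, hremainder⟩ := hnear θ hθ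
  refine ⟨hlead, d, fun φ hφ => ?_⟩
  have hdist : ‖(φ : ℂ) - θ‖ = |φ - θ| := by
    rw [← Complex.ofReal_sub, Complex.norm_real, Real.norm_eq_abs]
  rcases lt_or_ge |φ - θ| r with hφr | hφr
  · have hbase : ‖1 - saddleCoord θ φ ^ 2‖ ≤ 1 := (hexp θ hθ φ hφ).trans <|
      Real.exp_le_one_iff.2 (mul_nonpos_of_nonpos_of_nonneg (by linarith) (sq_nonneg _))
    have hball : (φ : ℂ) ∈ Metric.ball (θ : ℂ) r := by rwa [mem_ball_iff_norm, hdist]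
    calc ‖(1 - saddleCoord θ φ ^ 2) * saddleRemainder a b θ d φ‖
        ≤ 1 * (C * ‖(φ : ℂ) - θ‖ ^ 2) := by
          rw [norm_mul]
          gcongr
          exact hremainder φ hball
      _ ≤ max 0 (max C (M / r ^ 2)) * (φ - θ) ^ 2 := by
          rw [one_mul, hdist, sq_abs]
          gcongr
          exact (le_max_left _ _).trans (le_max_right _ _)
  · calc ‖(1 - saddleCoord θ φ ^ 2) * saddleRemainder a b θ d φ‖
        ≤ M / r ^ 2 * r ^ 2 := by
          rw [div_mul_cancel₀ _ (by positivity)]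
          exact hM θ hθ hlead d hd φ hφ
      _ ≤ max 0 (max C (M / r ^ 2)) * (φ - θ) ^ 2 := by
          rw [← sq_abs (φ - θ)]
          gcongr
          exact (le_max_right _ _).trans (le_max_right _ _)

end LocalExpansion

section LeadCoeff

variable {a b θ : ℝ}

lemma ofReal_mul_exp_mul_I_cpow {r t : ℝ} (hr : 0 < r) (ht : t ∈ Set.Ioc (-π) π) (s : ℝ) :
    ((r : ℂ) * Complex.exp (t * Complex.I)) ^ (s : ℂ) =
      (r ^ s : ℝ) * Complex.exp ((s * t : ℝ) * Complex.I) := by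
  have hlog : Complex.log ((r : ℂ) * Complex.exp (t * Complex.I)) = Real.log r + t * Complex.I := by
    rw [Complex.log_ofReal_mul hr (Complex.exp_ne_zero _), Complex.log_exp] <;> simp [ht.1, ht.2]
  rw [Complex.cpow_def_of_ne_zero (mul_ne_zero (Complex.ofReal_ne_zero.2 hr.ne')
    (Complex.exp_ne_zero _)), hlog, Real.rpow_def_of_pos hr, add_mul, Complex.exp_add]
  push_cast
  ring_nf

lemma one_add_exp_mul_I (θ : ℝ) :
    1 + Complex.exp (θ * Complex.I) =
      (2 * Real.cos (θ / 2) : ℝ) * Complex.exp ((θ / 2 : ℝ) * Complex.I) := by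
  push_cast
  rw [Complex.two_cos, add_mul, ← Complex.exp_add, ← Complex.exp_add, ← add_mul, ← add_mul,
    add_halves, neg_add_cancel, zero_mul, Complex.exp_zero, add_comm]

lemma one_sub_exp_mul_I (θ : ℝ) :
    1 - Complex.exp (θ * Complex.I) =
      (2 * Real.sin (θ / 2) : ℝ) * Complex.exp (((θ - π) / 2 : ℝ) * Complex.I) := by
  have hshift := one_add_exp_mul_I (θ - π)
  rw [sub_div, Real.cos_sub_pi_div_two, ← sub_div] at hshift
  rw [← hshift]
  push_cast
  rw [sub_mul, Complex.exp_sub, Complex.exp_pi_mul_I, div_neg, div_one, sub_eq_add_neg]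

lemma saddleDenom_self (θ : ℝ) :
    saddleDenom θ θ = Real.sin θ * Complex.exp ((π / 2 - θ : ℝ) * Complex.I) := by
  rw [saddleDenom, ← neg_mul, ← Complex.ofReal_neg, Complex.exp_ofReal_mul_I,
    Complex.exp_ofReal_mul_I, Real.cos_pi_div_two_sub, Real.sin_pi_div_two_sub, Real.cos_neg,
    Real.sin_neg]
  have hone : ((Real.sin θ ^ 2 + Real.cos θ ^ 2 : ℝ) : ℂ) = 1 := by
    rw [Real.sin_sq_add_cos_sq, Complex.ofReal_one]
  push_cast at hone ⊢
  linear_combination -hone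

lemma saddleLeadCoeff_eq_mul_cpow (hθ : θ ∈ Set.Ioo 0 π) :
    saddleLeadCoeff a b θ = (1 - Complex.exp (θ * Complex.I)) ^ (a : ℂ) *
      (1 + Complex.exp (θ * Complex.I)) ^ (b : ℂ) / jacobiWeightCos a b θ *
      (√2 * saddleDenom θ θ ^ (-(1 / 2) : ℂ)) := by
  have hdenom := saddleDenom_ne_zero hθ θ
  have hsqrt : ((√2 : ℝ) : ℂ) * √2 = 2 := by
    exact_mod_cast congrArg Complex.ofReal (Real.mul_self_sqrt zero_le_two)
  have hpow : saddleDenom θ θ * (saddleDenom θ θ ^ (-(1 / 2) : ℂ)) ^ 2 = 1 := by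
    rw [← Complex.cpow_nat_mul]
    norm_num [Complex.cpow_neg_one, hdenom]
  have hinv : (saddleDenom θ θ * (√2 / 2 * saddleDenom θ θ ^ (-(1 / 2) : ℂ)))⁻¹ =
      √2 * saddleDenom θ θ ^ (-(1 / 2) : ℂ) := by
    refine inv_eq_of_mul_eq_one_right ?_
    linear_combination hpow + saddleDenom θ θ * (saddleDenom θ θ ^ (-(1 / 2) : ℂ)) ^ 2 / 2 * hsqrt
  rw [saddleLeadCoeff, saddleAmplitude, saddleCoordDeriv_self hθ, ← hinv, div_div, mul_assoc,
    ← div_div, div_eq_mul_inv (_ / _)]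

lemma two_mul_rpow_div_two_mul_sq_rpow {x : ℝ} (hx : 0 < x) (s : ℝ) :
    (2 * x) ^ s / (2 * x ^ 2) ^ s = x ^ (-s) := by
  rw [← Real.div_rpow (by positivity) (by positivity), Real.rpow_neg hx.le, ← Real.inv_rpow hx.le]
  congr 1
  field_simp

lemma jacobiWeightCos_eq_half_angle (a b θ : ℝ) :
    jacobiWeightCos a b θ = (2 * Real.sin (θ / 2) ^ 2) ^ a * (2 * Real.cos (θ / 2) ^ 2) ^ b := by
  have hsin := Real.cos_two_mul_eq_one_sub (θ / 2)
  have hcos := Real.cos_two_mul (θ / 2)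
  rw [mul_div_cancel₀ _ two_ne_zero] at hsin hcos
  rw [jacobiWeightCos, show 2 * Real.sin (θ / 2) ^ 2 = 1 - Real.cos θ by linarith,
    show 2 * Real.cos (θ / 2) ^ 2 = 1 + Real.cos θ by linarith]

lemma sqrt_two_mul_sin_rpow (hθ : θ ∈ Set.Ioo 0 π) :
    √2 * Real.sin θ ^ (-(1 / 2) : ℝ) =
      Real.sin (θ / 2) ^ (-(1 / 2) : ℝ) * Real.cos (θ / 2) ^ (-(1 / 2) : ℝ) := by
  have hsin := sin_half_pos hθ
  have hcos := cos_half_pos hθ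
  have hdouble := Real.sin_two_mul (θ / 2)
  rw [mul_div_cancel₀ _ two_ne_zero] at hdouble
  rw [hdouble, Real.mul_rpow (by positivity) hcos.le, Real.mul_rpow zero_le_two hsin.le,
    Real.sqrt_eq_rpow, mul_assoc, ← mul_assoc, ← Real.rpow_add two_pos, add_neg_cancel,
    Real.rpow_zero, one_mul]

/-- The amplitude `(sin θ/2) ^ (-a - 1/2) * (cos θ/2) ^ (-b - 1/2)` of the leading term. -/
noncomputable def darbouxAmplitude (a b θ : ℝ) : ℝ :=
  Real.sin (θ / 2) ^ (-a - 1 / 2) * Real.cos (θ / 2) ^ (-b - 1 / 2)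

lemma darbouxAmplitude_eq (hθ : θ ∈ Set.Ioo 0 π) :
    darbouxAmplitude a b θ = (2 * Real.sin (θ / 2)) ^ a * (2 * Real.cos (θ / 2)) ^ b /
      jacobiWeightCos a b θ * (√2 * Real.sin θ ^ (-(1 / 2) : ℝ)) := by
  have hsin := sin_half_pos hθ
  have hcos := cos_half_pos hθ
  rw [darbouxAmplitude, sqrt_two_mul_sin_rpow hθ, jacobiWeightCos_eq_half_angle, mul_div_mul_comm,
    two_mul_rpow_div_two_mul_sq_rpow hsin, two_mul_rpow_div_two_mul_sq_rpow hcos,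
    mul_mul_mul_comm, ← Real.rpow_add hsin, ← Real.rpow_add hcos]
  rfl

lemma saddleLeadCoeff_eq (hθ : θ ∈ Set.Ioo 0 π) :
    saddleLeadCoeff a b θ = darbouxAmplitude a b θ *
      Complex.exp (((a + b + 1) / 2 * θ - π / 2 * (a + 1 / 2) : ℝ) * Complex.I) := by
  have hsin := sin_half_pos hθ
  have hcos := cos_half_pos hθ
  obtain ⟨hpos, hlt⟩ := hθ
  have hphase : Complex.exp (((a + b + 1) / 2 * θ - π / 2 * (a + 1 / 2) : ℝ) * Complex.I) =
      Complex.exp ((a * ((θ - π) / 2) : ℝ) * Complex.I) *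
        Complex.exp ((b * (θ / 2) : ℝ) * Complex.I) *
        Complex.exp ((-(1 / 2) * (π / 2 - θ) : ℝ) * Complex.I) := by
    rw [← Complex.exp_add, ← Complex.exp_add]
    congr 1
    push_cast
    ring
  have hexponent : (-(1 / 2) : ℂ) = ((-(1 / 2) : ℝ) : ℂ) := by push_cast; rfl
  rw [saddleLeadCoeff_eq_mul_cpow ⟨hpos, hlt⟩, darbouxAmplitude_eq ⟨hpos, hlt⟩, hphase,
    saddleDenom_self, one_sub_exp_mul_I, one_add_exp_mul_I, hexponent,
    ofReal_mul_exp_mul_I_cpow (by positivity) ⟨by linarith, by linarith⟩,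
    ofReal_mul_exp_mul_I_cpow (by positivity) ⟨by linarith, by linarith⟩,
    ofReal_mul_exp_mul_I_cpow (Real.sin_pos_of_pos_of_lt_pi hpos hlt) ⟨by linarith, by linarith⟩]
  simp only [Complex.ofReal_mul, Complex.ofReal_div]
  ring

lemma re_exp_pow_mul_saddleLeadCoeff (hθ : θ ∈ Set.Ioo 0 π) (n : ℕ) :
    (Complex.exp (θ * Complex.I) ^ n * saddleLeadCoeff a b θ).re = darbouxAmplitude a b θ *
      Real.cos ((n + (a + b + 1) / 2) * θ - π / 2 * (a + 1 / 2)) := by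
  rw [saddleLeadCoeff_eq hθ, mul_left_comm, Complex.re_ofReal_mul, ← Complex.exp_nat_mul,
    ← Complex.exp_add, ← Complex.exp_ofReal_mul_I_re]
  push_cast
  ring_nf

end LeadCoeff

section DarbouxAsymptotics

variable {a b θ : ℝ} {n : ℕ} {K : Set ℝ}

lemma integral_one_sub_saddleCoord_sq_pow_mul_saddleAmplitude (ha : -1 < a) (hb : -1 < b)
    (hn : 1 ≤ n) (hθ : θ ∈ Set.Ioo 0 π) (d : ℂ) :
    ∫ φ in 0..π, (1 - saddleCoord θ φ ^ 2) ^ n * saddleAmplitude a b θ φ =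
      saddleLeadCoeff a b θ * ((∫ s in (-1 : ℝ)..1, (1 - s ^ 2) ^ n : ℝ) : ℂ) +
        ∫ φ in 0..π, (1 - saddleCoord θ φ ^ 2) ^ n * saddleRemainder a b θ d φ := by
  have hcoord := continuous_saddleCoord_ofReal hθ
  have hcoordDeriv := continuous_saddleCoordDeriv_ofReal hθ
  have hamp := continuous_one_sub_saddleCoord_sq_pow_mul_saddleAmplitude ha hb hn hθ
  have hsplit : ∀ φ : ℝ, (1 - saddleCoord θ φ ^ 2) ^ n * saddleRemainder a b θ d φ =
      (1 - saddleCoord θ φ ^ 2) ^ n * saddleAmplitude a b θ φ -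
        saddleLeadCoeff a b θ * ((1 - saddleCoord θ φ ^ 2) ^ n * saddleCoordDeriv θ φ) -
        d * ((1 - saddleCoord θ φ ^ 2) ^ n * (saddleCoord θ φ * saddleCoordDeriv θ φ)) :=
    fun φ => by rw [saddleRemainder]; ring
  simp only [hsplit]
  rw [intervalIntegral.integral_sub, intervalIntegral.integral_sub,
    intervalIntegral.integral_const_mul, intervalIntegral.integral_const_mul,
    integral_one_sub_saddleCoord_sq_pow_mul_deriv hθ,
    integral_one_sub_saddleCoord_sq_pow_mul_coord_mul_deriv hθ, mul_zero, sub_zero,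
    add_sub_cancel]
  all_goals exact Continuous.intervalIntegrable (by fun_prop) 0 π

lemma exists_norm_integral_sub_saddleLeadCoeff_mul_le (ha : -1 < a) (hb : -1 < b)
    (hK : IsCompact K) (hKπ : K ⊆ Set.Ioo 0 π) :
    ∃ C, ∀ θ ∈ K, ∀ n : ℕ, 1 ≤ n →
      ‖(∫ φ in 0..π, (1 - saddleCoord θ φ ^ 2) ^ n * saddleAmplitude a b θ φ) -
        saddleLeadCoeff a b θ * √(π / n)‖ ≤ C * (n : ℝ) ^ (-(3 : ℝ) / 2) := by
  obtain ⟨c, hc, hexp⟩ := exists_norm_one_sub_saddleCoord_sq_le_exp hK hKπ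
  obtain ⟨C, hC, D, hremainder⟩ :=
    exists_norm_one_sub_saddleCoord_sq_mul_saddleRemainder_le ha hb hK hKπ
  refine ⟨D * √π + C * Real.exp (c * (π - 0) ^ 2) * (2 / c * √(2 * π / c)), fun θ hθ n hn => ?_⟩
  obtain ⟨hlead, d, hd⟩ := hremainder θ hθ
  have hwallis := abs_integral_one_sub_sq_pow_sub_sqrt_le hn
  rw [integral_one_sub_saddleCoord_sq_pow_mul_saddleAmplitude ha hb hn (hKπ hθ) d,
    add_sub_right_comm, ← mul_sub, ← Complex.ofReal_sub, add_mul]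
  refine (norm_add_le _ _).trans (add_le_add ?_ ?_)
  · rw [norm_mul, Complex.norm_real, Real.norm_eq_abs, mul_assoc]
    exact mul_le_mul hlead hwallis (abs_nonneg _) ((norm_nonneg _).trans hlead)
  · exact norm_integral_pow_mul_le hn hc hC (Set.Ioo_subset_Icc_self (hKπ hθ)) (hexp θ hθ) hd

lemma sqrt_pi_div_natCast (hn : 1 ≤ n) : √(π / n) = π * (π * n) ^ (-(1 : ℝ) / 2) := by
  have : (0 : ℝ) < n := by exact_mod_cast hn
  rw [neg_div, Real.rpow_neg (by positivity), ← Real.sqrt_eq_rpow, ← div_eq_mul_inv,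
    ← mul_div_mul_left π (n : ℝ) Real.pi_ne_zero, Real.sqrt_div (by positivity),
    Real.sqrt_mul_self Real.pi_pos.le]

lemma pi_mul_jacobiP_sub_eq_re (ha : -1 < a) (hb : -1 < b) (hn : 1 ≤ n) (hθ : θ ∈ Set.Ioo 0 π) :
    π * (jacobiP a b n (Real.cos θ) - (π * n) ^ (-(1 : ℝ) / 2) * (darbouxAmplitude a b θ *
      Real.cos ((n + (a + b + 1) / 2) * θ - π / 2 * (a + 1 / 2)))) =
    (Complex.exp (θ * Complex.I) ^ n *
      ((∫ φ in 0..π, (1 - saddleCoord θ φ ^ 2) ^ n * saddleAmplitude a b θ φ) -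
        saddleLeadCoeff a b θ * √(π / n))).re := by
  rw [mul_sub, mul_sub, Complex.sub_re, ← jacobiP_cos_eq_re_integral ha hb hn hθ, ← mul_assoc π,
    ← sqrt_pi_div_natCast hn, ← re_exp_pow_mul_saddleLeadCoeff hθ n, ← mul_assoc,
    Complex.re_mul_ofReal, mul_comm √(π / n)]

end DarbouxAsymptotics

/-- Darboux/Szegő asymptotics for Jacobi polynomials, uniformly on compact
subsets of `(0,π)`, with error `O(n^{-3/2})`. -/
theorem jacobiP_darboux_asymptotics (a b : ℝ) (ha : -1 < a) (hb : -1 < b)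
    (K : Set ℝ) (hK : IsCompact K) (hK' : K ⊆ Set.Ioo 0 π) :
    ∃ C : ℝ, ∀ n : ℕ, 1 ≤ n → ∀ θ ∈ K,
      |jacobiP a b n (Real.cos θ) -
          (π * n) ^ (-(1 : ℝ) / 2) * (Real.sin (θ / 2)) ^ (-a - 1 / 2) *
            (Real.cos (θ / 2)) ^ (-b - 1 / 2) *
            Real.cos (((n : ℝ) + (a + b + 1) / 2) * θ - (π / 2) * (a + 1 / 2))| ≤
        C * (n : ℝ) ^ (-(3 : ℝ) / 2) := by
  obtain ⟨C, hC⟩ := exists_norm_integral_sub_saddleLeadCoeff_mul_le ha hb hK hK'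
  refine ⟨C / π, fun n hn θ hθ => ?_⟩
  rw [mul_assoc (_ ^ _) (_ ^ _), mul_assoc (_ ^ _) (_ * _), ← darbouxAmplitude,
    div_mul_eq_mul_div C, le_div_iff₀' Real.pi_pos]
  calc π * |jacobiP a b n (Real.cos θ) - (π * n) ^ (-(1 : ℝ) / 2) * (darbouxAmplitude a b θ *
          Real.cos ((n + (a + b + 1) / 2) * θ - π / 2 * (a + 1 / 2)))|
      = |(Complex.exp (θ * Complex.I) ^ n *
          ((∫ φ in 0..π, (1 - saddleCoord θ φ ^ 2) ^ n * saddleAmplitude a b θ φ) -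
            saddleLeadCoeff a b θ * √(π / n))).re| := by
        rw [← pi_mul_jacobiP_sub_eq_re ha hb hn (hK' hθ), abs_mul, abs_of_pos Real.pi_pos]
    _ ≤ ‖(∫ φ in 0..π, (1 - saddleCoord θ φ ^ 2) ^ n * saddleAmplitude a b θ φ) -
          saddleLeadCoeff a b θ * √(π / n)‖ := by
        refine (Complex.abs_re_le_norm _).trans_eq ?_
        rw [norm_mul, norm_pow, Complex.norm_exp_ofReal_mul_I, one_pow, one_mul]
    _ ≤ C * (n : ℝ) ^ (-(3 : ℝ) / 2) := hC θ hθ n hn
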